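/- Let β > 1 be real. There exists a function F : ℂ → ℂ such that: (i) F is analytic (complex differentiable) at every point s with Re(s) > 0 other than the points 1 + 2πik/log β, k ∈ ℤ; (ii) F(s) = ∑_{n=1}^∞ d_β(n) n^{-s} for every s with Re(s) > 1; (iii) (s-1)² F(s) → (β-1)/(2 log β) as s → 1 (s ≠ 1), and ((s-1)² F(s) - (β-1)/(2 log β))/(s-1) → ((β-1)/(2 log β)) log(2π) - (β+1)/4 as s → 1; (iv) for every nonzero k ∈ ℤ, with p = 1 + 2πik/log β, (s - p) F(s) → (1 + 2πik/log β) · c_β(k) = -((β-1)/(2πik)) ζ(2πik/log β) as s → p (s ≠ p). -/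

import Mathlib

open Filter Topology

noncomputable section

/-- The Fourier coefficients `c_β(k)` from Delange's theorem. -/
def delangeCoeff (β : ℝ) (k : ℤ) : ℂ :=
  if k = 0 then
    ((((β : ℂ) - 1) / (2 * Real.log β)) * (Real.log (2 * Real.pi) - 1) - ((β : ℂ) + 1) / 4)
  else
    -(((β : ℂ) - 1) / (2 * Real.pi * Complex.I * k)) *
      (1 + 2 * Real.pi * Complex.I * k / Real.log β)⁻¹ *
      riemannZeta (2 * Real.pi * Complex.I * k / Real.log β)

/-- The periodic function `h_β` from Delange's theorem. -/
def delangeH (β : ℝ) (x : ℝ) : ℂ :=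
  ∑' k : ℤ, delangeCoeff β k * Complex.exp (2 * Real.pi * Complex.I * k * x)

/-- The interpolated cumulative sum-of-digits function `S_β(n)`. -/
def cumDigitSumInterp (β : ℝ) (n : ℕ) : ℂ :=
  (((β : ℂ) - 1) / (2 * Real.log β)) * n * Real.log n +
    delangeH β (Real.log n / Real.log β) * n

/-- The interpolated sum-of-digits function `d_β(n) = S_β(n+1) - S_β(n)`. -/
def digitSumInterp (β : ℝ) (n : ℕ) : ℂ :=
  cumDigitSumInterp β (n + 1) - cumDigitSumInterp β n

/-!
Abel summation turns `F_β(s)` into `s ∫ (S_β(⌊x⌋ + 1) - S_β(1)) x^(-s-1) dx` over `x > 1`. Extend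
`S_β` to real arguments by the formula `S_β(x) = a x log x + x h_β(log x / log β)`. If `h_β` is
Hölder of every exponent below `1`, replacing `⌊x⌋ + 1` by `x` costs `O(x^ε)` for every `ε > 0`,
which contributes a function holomorphic for `re s > 0`. The transform of `S_β(x)` itself is
explicit: `a / (s - 1)^2` comes from `a x log x`, and periodicity of `h_β` turns the rest into an
integral over one period `[1, β]` divided by `1 - β^(1-s)`, whose residues are the Fourier
coefficients of `h_β`.

The regularity of `h_β` is not visible from its coefficients, so the function is given in closed
form: a Takagi-type series `∑ β^(-r) B(β^r x)`, with `B` the primitive of the sawtooth, satisfies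
`T(βx) = β (T(x) - B(x))`, which makes its Mellin integral over a period unfold into the Mellin
integral of `B` over `x > 1`, that is, into `ζ` on the line `re s = 0`. This identifies its Fourier
coefficients with `c_β(k)`, and Bernstein's theorem makes the Fourier series converge to it.
-/

section TailMellin

open MeasureTheory Set Asymptotics

/-- The Mellin transform of the part of `f` on `(1, ∞)`, in the variable `-s`, so that it converges
on a right half-plane: `∫_1^∞ f(x) x^{-s-1} dx`. -/
def tailMellin (f : ℝ → ℂ) (s : ℂ) : ℂ := ∫ x in Ioi (1 : ℝ), f x * (x : ℂ) ^ (-(s + 1))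

/-- Absolute convergence of the integral defining `tailMellin f s`. -/
def TailMellinConvergent (f : ℝ → ℂ) (s : ℂ) : Prop :=
  IntegrableOn (fun x : ℝ ↦ f x * (x : ℂ) ^ (-(s + 1))) (Ioi 1)

variable {f g : ℝ → ℂ} {r : ℝ} {s : ℂ}

lemma tailMellin_eq_mellin (f : ℝ → ℂ) (s : ℂ) :
    tailMellin f s = mellin ((Ioi 1).indicator f) (-s) := by
  have cpow_smul_indicator (x : ℝ) : (x : ℂ) ^ (-s - 1) • (Ioi 1).indicator f x =
      (Ioi 1).indicator (fun y : ℝ ↦ f y * (y : ℂ) ^ (-(s + 1))) x := by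
    by_cases hx : x ∈ Ioi 1
    · rw [indicator_of_mem hx, indicator_of_mem hx, smul_eq_mul, mul_comm, neg_add']
    · rw [indicator_of_notMem hx, indicator_of_notMem hx, smul_zero]
  simp only [tailMellin, mellin, cpow_smul_indicator]
  rw [setIntegral_indicator measurableSet_Ioi, inter_eq_right.2 (Ioi_subset_Ioi zero_le_one)]

lemma tailMellin_congr (h : EqOn f g (Ioi 1)) (s : ℂ) : tailMellin f s = tailMellin g s :=
  setIntegral_congr_fun measurableSet_Ioi fun _ hx ↦ by rw [h hx]

lemma TailMellinConvergent.congr (hf : TailMellinConvergent f s) (h : EqOn f g (Ioi 1)) :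
    TailMellinConvergent g s :=
  IntegrableOn.congr_fun hf (fun x hx ↦ by simp only [h hx]) measurableSet_Ioi

lemma tailMellin_add (hf : TailMellinConvergent f s) (hg : TailMellinConvergent g s) :
    tailMellin (fun x ↦ f x + g x) s = tailMellin f s + tailMellin g s := by
  simp only [tailMellin, add_mul]
  exact integral_add hf hg

lemma TailMellinConvergent.const_mul (c : ℂ) (hf : TailMellinConvergent f s) :
    TailMellinConvergent (fun x ↦ c * f x) s :=
  (Integrable.const_mul hf c).congr (.of_forall fun _ ↦ (mul_assoc _ _ _).symm)

lemma TailMellinConvergent.sub (hf : TailMellinConvergent f s) (hg : TailMellinConvergent g s) :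
    TailMellinConvergent (fun x ↦ f x - g x) s :=
  (Integrable.sub hf hg).congr (.of_forall fun _ ↦ (sub_mul _ _ _).symm)

lemma tailMellin_sub (hf : TailMellinConvergent f s) (hg : TailMellinConvergent g s) :
    tailMellin (fun x ↦ f x - g x) s = tailMellin f s - tailMellin g s := by
  simp only [tailMellin, sub_mul]
  exact integral_sub hf hg

lemma tailMellin_const_mul (c : ℂ) (f : ℝ → ℂ) (s : ℂ) :
    tailMellin (fun x ↦ c * f x) s = c * tailMellin f s := by
  simp only [tailMellin, mul_assoc, integral_const_mul]

lemma tailMellin_id_mul (f : ℝ → ℂ) (s : ℂ) :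
    tailMellin (fun x ↦ x * f x) s = tailMellin f (s - 1) :=
  setIntegral_congr_fun measurableSet_Ioi fun x hx ↦ by
    have hx0 : (x : ℂ) ≠ 0 := by exact_mod_cast (one_pos.trans hx).ne'
    rw [show -(s - 1 + 1) = 1 + -(s + 1) by ring, Complex.cpow_add _ _ hx0, Complex.cpow_one]
    ring

lemma tailMellin_one (hs : 0 < s.re) : tailMellin (fun _ ↦ 1) s = 1 / s := by
  have hs' : (-(s + 1)).re < -1 := by simpa using hs
  simp only [tailMellin, one_mul, integral_Ioi_cpow_of_lt hs' one_pos]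
  rw [show -(s + 1) + 1 = -s by ring]
  simp

lemma tailMellinConvergent_of_isBigO (hf : AEStronglyMeasurable f (volume.restrict (Ioi 1)))
    (hfO : f =O[𝓟 (Ioi 1)] fun x ↦ x ^ r) (hs : r < s.re) :
    TailMellinConvergent f s := by
  obtain ⟨C, hC⟩ := isBigO_principal.1 hfO
  have hmeas : AEStronglyMeasurable (fun x : ℝ ↦ (x : ℂ) ^ (-(s + 1)))
      (volume.restrict (Ioi 1)) :=
    (Complex.measurable_ofReal.pow_const _).aestronglyMeasurable
  refine ((integrableOn_Ioi_rpow_of_lt (a := r - (s.re + 1)) (by linarith) one_pos).const_mul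
    C).mono' (hf.mul hmeas) ?_
  filter_upwards [ae_restrict_mem measurableSet_Ioi] with x hx
  have hx0 : 0 < x := one_pos.trans hx
  calc ‖f x * (x : ℂ) ^ (-(s + 1))‖ = ‖f x‖ * x ^ (-(s.re + 1)) := by
        rw [norm_mul, Complex.norm_cpow_eq_rpow_re_of_pos hx0]; simp
    _ ≤ C * ‖x ^ r‖ * x ^ (-(s.re + 1)) := by gcongr; exact hC x hx
    _ = C * x ^ (r - (s.re + 1)) := by
        rw [Real.norm_of_nonneg (by positivity), mul_assoc, ← Real.rpow_add hx0, sub_eq_add_neg]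

lemma differentiableAt_tailMellin (hf : AEStronglyMeasurable f (volume.restrict (Ioi 1)))
    (hfO : f =O[𝓟 (Ioi 1)] fun x ↦ x ^ r) (hs : r < s.re) :
    DifferentiableAt ℂ (tailMellin f) s := by
  have hloc : LocallyIntegrable ((Ioi 1).indicator f) := by
    obtain ⟨C, hC⟩ := isBigO_principal.1 hfO
    have hcont : Continuous fun x : ℝ ↦ C * (max x 1) ^ r := continuous_const.mul
      ((continuous_id.max continuous_const).rpow_const fun x ↦
        .inl (lt_max_of_lt_right one_pos).ne')
    refine hcont.locallyIntegrable.mono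
      ((aestronglyMeasurable_indicator_iff measurableSet_Ioi).2 hf) (.of_forall fun x ↦ ?_)
    by_cases hx : x ∈ Ioi 1
    · rw [indicator_of_mem hx, max_eq_left (le_of_lt hx), norm_mul]
      exact (hC x hx).trans (mul_le_mul_of_nonneg_right (le_abs_self C) (norm_nonneg _))
    · rw [indicator_of_notMem hx, norm_zero]
      exact norm_nonneg _
  have htop : (Ioi 1).indicator f =O[atTop] fun x : ℝ ↦ x ^ (-(-r)) := by
    rw [neg_neg]
    refine (hfO.mono (le_principal_iff.2 (Ioi_mem_atTop 1))).congr' ?_ .rfl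
    filter_upwards [Ioi_mem_atTop 1] with x hx using (indicator_of_mem hx f).symm
  have hbot : (Ioi 1).indicator f =O[𝓝[>] 0] fun x : ℝ ↦ x ^ (-((-s).re - 1)) := by
    refine (isBigO_zero _ _).congr' ?_ .rfl
    filter_upwards [mem_nhdsWithin_of_mem_nhds (Iio_mem_nhds (one_pos (α := ℝ)))] with x hx
      using (indicator_of_notMem (by simpa using hx.le) f).symm
  have hmellin := mellin_differentiableAt_of_isBigO_rpow (s := -s)
    (hloc.locallyIntegrableOn _) htop (by simpa using hs) hbot (by simp)
  rw [funext (tailMellin_eq_mellin f)]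
  exact hmellin.comp s differentiableAt_id.neg

lemma tendsto_mul_cpow_neg_atTop (hfO : f =O[𝓟 (Ioi 1)] fun x ↦ x ^ r) (hs : r < s.re) :
    Tendsto (fun x : ℝ ↦ f x * (x : ℂ) ^ (-s)) atTop (𝓝 0) := by
  have hO : (fun x : ℝ ↦ f x * (x : ℂ) ^ (-s)) =O[atTop] fun x ↦ x ^ r * x ^ (-s.re) :=
    (hfO.mono (le_principal_iff.2 (Ioi_mem_atTop 1))).mul <| IsBigO.of_bound 1 <| by
      filter_upwards [eventually_gt_atTop 0] with x hx
      rw [Complex.norm_cpow_eq_rpow_re_of_pos hx, Complex.neg_re, one_mul]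
      exact Real.le_norm_self _
  refine hO.trans_tendsto ((tendsto_rpow_neg_atTop (sub_pos.2 hs)).congr' ?_)
  filter_upwards [eventually_gt_atTop 0] with x hx
  rw [← Real.rpow_add hx, neg_sub, sub_eq_add_neg]

/-- Integration by parts; one-sided derivatives allow `f` to have corners. -/
lemma tailMellin_of_hasDerivWithinAt (hcont : ContinuousOn f (Ici 1))
    (hderiv : ∀ x ∈ Ioi 1, HasDerivWithinAt f (g x) (Ioi x) x)
    (hfO : f =O[𝓟 (Ioi 1)] fun x ↦ x ^ r) (hs : r < s.re)
    (hg : TailMellinConvergent (fun x ↦ x * g x) s) :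
    tailMellin (fun x ↦ x * g x) s = s * tailMellin f s - f 1 := by
  have hf : TailMellinConvergent (fun x ↦ s * f x) s := .const_mul s <|
    tailMellinConvergent_of_isBigO
      ((hcont.mono Ioi_subset_Ici_self).aestronglyMeasurable measurableSet_Ioi) hfO hs
  have hftc (N : ℝ) (hN : 1 ≤ N) : ∫ x in (1 : ℝ)..N,
      (x * g x - s * f x) * (x : ℂ) ^ (-(s + 1)) = f N * (N : ℂ) ^ (-s) - f 1 := by
    rw [intervalIntegral.integral_eq_sub_of_hasDeriv_right (f := fun x : ℝ ↦ f x * (x : ℂ) ^ (-s))]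
    · simp
    · rw [uIcc_of_le hN]
      exact (hcont.mono Icc_subset_Ici_self).mul fun x hx ↦
        (Complex.continuousAt_ofReal_cpow_const _ _
          (.inr (one_pos.trans_le hx.1).ne')).continuousWithinAt
    · rw [min_eq_left hN, max_eq_right hN]
      intro x hx
      have hx0 : (x : ℂ) ≠ 0 := by exact_mod_cast (one_pos.trans hx.1).ne'
      have hpow := ((hasDerivAt_id (x : ℂ)).cpow_const (c := -s)
        (Complex.ofReal_mem_slitPlane.2 (one_pos.trans hx.1))).comp_ofReal
      refine ((hderiv x hx.1).mul hpow.hasDerivWithinAt).congr_deriv ?_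
      rw [id, neg_add', Complex.cpow_sub _ _ hx0, Complex.cpow_one]
      field_simp
      ring
    · rw [intervalIntegrable_iff_integrableOn_Ioc_of_le hN]
      exact (hg.sub hf).mono_set Ioc_subset_Ioi_self
  have hlim := ((tendsto_mul_cpow_neg_atTop hfO hs).sub_const (f 1)).congr' <| by
    filter_upwards [eventually_ge_atTop 1] with N hN using (hftc N hN).symm
  have htail : tailMellin (fun x ↦ x * g x - s * f x) s = 0 - f 1 :=
    tendsto_nhds_unique (intervalIntegral_tendsto_integral_Ioi 1 (hg.sub hf) tendsto_id) hlim
  rw [tailMellin_sub hg hf, tailMellin_const_mul] at htail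
  linear_combination htail

lemma log_isBigO_rpow (hr : 0 < r) : Real.log =O[𝓟 (Ioi 1)] fun x ↦ x ^ r := by
  refine isBigO_principal.2 ⟨1 / r, fun x hx ↦ ?_⟩
  have hx0 : 0 ≤ x := zero_le_one.trans (le_of_lt hx)
  rw [Real.norm_of_nonneg (Real.log_nonneg (le_of_lt hx)),
    Real.norm_of_nonneg (Real.rpow_nonneg hx0 r), one_div_mul_eq_div]
  exact Real.log_le_rpow_div hx0 hr

lemma tailMellinConvergent_one (hs : 0 < s.re) : TailMellinConvergent (fun _ ↦ 1) s :=
  tailMellinConvergent_of_isBigO (r := 0) aestronglyMeasurable_const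
    (by simpa only [Real.rpow_zero] using isBigO_const_const _ one_ne_zero _) hs

lemma tailMellinConvergent_log (hs : 0 < s.re) :
    TailMellinConvergent (fun x ↦ (Real.log x : ℂ)) s := by
  obtain ⟨r, hr0, hrs⟩ := exists_between hs
  exact tailMellinConvergent_of_isBigO
    (Complex.measurable_ofReal.comp Real.measurable_log).aestronglyMeasurable
    (Complex.isBigO_ofReal_left.2 (log_isBigO_rpow hr0)) hrs

lemma tailMellin_log (hs : 0 < s.re) : tailMellin (fun x ↦ (Real.log x : ℂ)) s = 1 / s ^ 2 := by
  obtain ⟨r, hr0, hrs⟩ := exists_between hs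
  have hinv : EqOn (fun x : ℝ ↦ (x : ℂ) * ((x⁻¹ : ℝ) : ℂ)) (fun _ ↦ 1) (Ioi 1) := fun x hx ↦ by
    have hx0 : x ≠ 0 := (one_pos.trans hx).ne'
    simp [hx0]
  have hparts := tailMellin_of_hasDerivWithinAt
    (Complex.continuous_ofReal.comp_continuousOn
      (Real.continuousOn_log.mono fun x hx ↦ (one_pos.trans_le hx).ne'))
    (fun x hx ↦ (Real.hasDerivAt_log (one_pos.trans hx).ne').ofReal_comp.hasDerivWithinAt)
    (Complex.isBigO_ofReal_left.2 (log_isBigO_rpow hr0)) hrs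
    ((tailMellinConvergent_one hs).congr hinv.symm)
  rw [tailMellin_congr hinv, tailMellin_one hs, Function.comp_apply, Real.log_one,
    Complex.ofReal_zero, sub_zero] at hparts
  have hs0 : s ≠ 0 := Complex.ne_zero_of_re_pos hs
  calc tailMellin (fun x ↦ (Real.log x : ℂ)) s
      = s * tailMellin (Complex.ofReal ∘ Real.log) s / s := (mul_div_cancel_left₀ _ hs0).symm
    _ = 1 / s ^ 2 := by rw [← hparts, sq, div_div]

lemma integral_one_eq_tailMellin_sub {β : ℝ} (hβ : 1 ≤ β) (hf : TailMellinConvergent f s) :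
    ∫ x in (1 : ℝ)..β, f x * (x : ℂ) ^ (-(s + 1)) =
      tailMellin f s - (β : ℂ) ^ (-s) * tailMellin (fun x ↦ f (β * x)) s := by
  have hβ0 : 0 < β := one_pos.trans_le hβ
  have hβ0' : (β : ℂ) ≠ 0 := by exact_mod_cast hβ0.ne'
  have hscale : ∫ x in Ioi β, f x * (x : ℂ) ^ (-(s + 1)) =
      (β : ℂ) ^ (-s) * tailMellin (fun x ↦ f (β * x)) s := by
    have hsubst := integral_comp_mul_left_Ioi (fun x ↦ f x * (x : ℂ) ^ (-(s + 1))) 1 hβ0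
    rw [mul_one, eq_inv_smul_iff₀ hβ0.ne'] at hsubst
    rw [← hsubst, tailMellin, Complex.real_smul, ← integral_const_mul, ← integral_const_mul]
    refine setIntegral_congr_fun measurableSet_Ioi fun x hx ↦ ?_
    have hx0 : 0 ≤ x := zero_le_one.trans (le_of_lt hx)
    simp only [Complex.ofReal_mul, Complex.mul_cpow_ofReal_nonneg hβ0.le hx0, neg_add',
      Complex.cpow_sub _ _ hβ0', Complex.cpow_one]
    field_simp
  rw [← hscale, tailMellin, intervalIntegral.integral_Ioi_sub_Ioi hf hβ]

end TailMellin

section Zeta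

open MeasureTheory Set Asymptotics

/-- The `1`-periodic primitive of the sawtooth `{x} - 1/2` that vanishes at the integers. -/
def sawtoothPrimitive (x : ℝ) : ℝ := (Int.fract x ^ 2 - Int.fract x) / 2

lemma abs_sawtoothPrimitive_le (x : ℝ) : |sawtoothPrimitive x| ≤ 1 / 8 := by
  have h0 := Int.fract_nonneg x
  have h1 := Int.fract_lt_one x
  rw [sawtoothPrimitive, abs_le]
  constructor <;> nlinarith [sq_nonneg (Int.fract x - 1 / 2)]

lemma sawtoothPrimitive_one : sawtoothPrimitive 1 = 0 := by simp [sawtoothPrimitive]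

lemma continuous_sawtoothPrimitive : Continuous sawtoothPrimitive :=
  ContinuousOn.comp_fract'' (f := fun x : ℝ ↦ (x ^ 2 - x) / 2) (by fun_prop) (by norm_num)

lemma hasDerivWithinAt_sawtoothPrimitive (x : ℝ) :
    HasDerivWithinAt sawtoothPrimitive (Int.fract x - 1 / 2) (Ioi x) x := by
  have hpoly :
      HasDerivAt (fun y : ℝ ↦ ((y - ⌊x⌋) ^ 2 - (y - ⌊x⌋)) / 2) (Int.fract x - 1 / 2) x := by
    have hsub : HasDerivAt (fun y : ℝ ↦ y - ⌊x⌋) 1 x := (hasDerivAt_id x).sub_const _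
    refine (((hsub.pow 2).sub hsub).div_const 2).congr_deriv ?_
    rw [← Int.self_sub_floor]
    push_cast
    ring
  refine hpoly.hasDerivWithinAt.congr_of_eventuallyEq ?_ (by
    rw [sawtoothPrimitive, Int.self_sub_floor])
  filter_upwards [Ioo_mem_nhdsGT (Int.lt_floor_add_one x)] with y hy
  have hfloor : ⌊y⌋ = ⌊x⌋ := Int.floor_eq_iff.2 ⟨(Int.floor_le x).trans hy.1.le, hy.2⟩
  rw [sawtoothPrimitive, ← Int.self_sub_floor, hfloor]

lemma abs_fract_sub_half_le (x : ℝ) : |Int.fract x - 1 / 2| ≤ 1 / 2 := by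
  rw [abs_le]
  constructor <;> linarith [Int.fract_nonneg x, Int.fract_lt_one x]

lemma lipschitzWith_sawtoothPrimitive : LipschitzWith 1 sawtoothPrimitive := by
  refine LipschitzWith.of_dist_le_mul fun x y ↦ ?_
  wlog h : y ≤ x generalizing x y
  · rw [dist_comm, dist_comm x]
    exact this y x (le_of_not_ge h)
  rw [dist_eq_norm, Real.dist_eq, abs_of_nonneg (sub_nonneg.2 h)]
  exact norm_image_sub_le_of_norm_deriv_right_le_segment continuous_sawtoothPrimitive.continuousOn
    (fun z _ ↦ hasDerivWithinAt_Ioi_iff_Ici.1 (hasDerivWithinAt_sawtoothPrimitive z))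
    (fun z _ ↦ (abs_fract_sub_half_le z).trans (by norm_num)) x ⟨h, le_rfl⟩

lemma measurable_sawtooth : Measurable fun x : ℝ ↦ ((Int.fract x - 1 / 2 : ℝ) : ℂ) :=
  Complex.measurable_ofReal.comp (measurable_fract.sub_const _)

lemma sawtooth_isBigO_one (l : Filter ℝ) :
    (fun x : ℝ ↦ ((Int.fract x - 1 / 2 : ℝ) : ℂ)) =O[l] fun x ↦ x ^ (0 : ℝ) :=
  IsBigO.of_bound (1 / 2) <| .of_forall fun x ↦ by
    simpa only [Complex.norm_real, Real.norm_eq_abs, Real.rpow_zero, abs_one, mul_one]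
      using abs_fract_sub_half_le x

lemma sawtoothPrimitive_isBigO_one (l : Filter ℝ) :
    (fun x ↦ (sawtoothPrimitive x : ℂ)) =O[l] fun x ↦ x ^ (0 : ℝ) :=
  IsBigO.of_bound (1 / 8) <| .of_forall fun x ↦ by
    simpa only [Complex.norm_real, Real.norm_eq_abs, Real.rpow_zero, abs_one, mul_one]
      using abs_sawtoothPrimitive_le x

lemma aestronglyMeasurable_sawtoothPrimitive (μ : Measure ℝ) :
    AEStronglyMeasurable (fun x ↦ (sawtoothPrimitive x : ℂ)) μ :=
  (Complex.continuous_ofReal.comp continuous_sawtoothPrimitive).aestronglyMeasurable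

variable {s : ℂ}

lemma tailMellinConvergent_sawtooth (hs : 0 < s.re) :
    TailMellinConvergent (fun x ↦ ((Int.fract x - 1 / 2 : ℝ) : ℂ)) s :=
  tailMellinConvergent_of_isBigO measurable_sawtooth.aestronglyMeasurable
    (sawtooth_isBigO_one _) hs

lemma tailMellin_sawtooth (hs : 0 < s.re) :
    tailMellin (fun x ↦ ((Int.fract x - 1 / 2 : ℝ) : ℂ)) s =
      (s + 1) * tailMellin (fun x ↦ (sawtoothPrimitive x : ℂ)) (s + 1) := by
  have hconv : TailMellinConvergent (fun x ↦ x * ((Int.fract x - 1 / 2 : ℝ) : ℂ)) (s + 1) := by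
    refine tailMellinConvergent_of_isBigO (r := 1)
      (Complex.measurable_ofReal.mul measurable_sawtooth).aestronglyMeasurable ?_
      (by simpa using hs)
    simpa only [Real.rpow_one, Real.rpow_zero, mul_one] using
      (Complex.isBigO_ofReal_left.2 (isBigO_refl (fun x : ℝ ↦ x) _)).mul (sawtooth_isBigO_one _)
  have hparts := tailMellin_of_hasDerivWithinAt
    (Complex.continuous_ofReal.comp continuous_sawtoothPrimitive).continuousOn
    (fun x _ ↦ (hasDerivWithinAt_sawtoothPrimitive x).ofReal_comp)
    (sawtoothPrimitive_isBigO_one _) (by simp; linarith) hconv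
  rw [tailMellin_id_mul, add_sub_cancel_right, Function.comp_apply, sawtoothPrimitive_one,
    Complex.ofReal_zero, sub_zero] at hparts
  exact hparts

lemma tailMellin_natFloor (hs : 1 < s.re) :
    tailMellin (fun x ↦ (⌊x⌋₊ : ℂ)) s =
      1 / (s - 1) - 1 / (2 * s) - tailMellin (fun x ↦ ((Int.fract x - 1 / 2 : ℝ) : ℂ)) s := by
  have hs0 : 0 < s.re := one_pos.trans hs
  have hid : TailMellinConvergent (fun x ↦ (x : ℂ) * 1) s :=
    tailMellinConvergent_of_isBigO (r := 1) (by fun_prop) (by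
      simpa only [Real.rpow_one, mul_one] using
        Complex.isBigO_ofReal_left.2 (isBigO_refl (fun x : ℝ ↦ x) _)) hs
  have hhalf : TailMellinConvergent (fun _ ↦ 1 / 2 * 1) s :=
    (tailMellinConvergent_one hs0).const_mul (1 / 2)
  have hsplit : EqOn (fun x : ℝ ↦ (⌊x⌋₊ : ℂ))
      (fun x ↦ x * 1 - 1 / 2 * 1 - ((Int.fract x - 1 / 2 : ℝ) : ℂ)) (Ioi 1) := fun x hx ↦ by
    have hfloor : (⌊x⌋₊ : ℝ) = x - Int.fract x := by
      rw [Int.self_sub_fract, natCast_floor_eq_intCast_floor (zero_le_one.trans (le_of_lt hx))]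
    simp only [← Complex.ofReal_natCast, hfloor]
    push_cast
    ring
  rw [tailMellin_congr hsplit, tailMellin_sub (hid.sub hhalf) (tailMellinConvergent_sawtooth hs0),
    tailMellin_sub hid hhalf, tailMellin_id_mul, tailMellin_const_mul, tailMellin_one hs0,
    tailMellin_one (by simpa using hs)]
  ring

/-- The continuation of `ζ` to `Re s > -1` provided by partial summation and one integration by
parts. -/
def zetaMellin (s : ℂ) : ℂ :=
  s / (s - 1) - 1 / 2 - s * (s + 1) * tailMellin (fun x ↦ (sawtoothPrimitive x : ℂ)) (s + 1)

lemma riemannZeta_eq_zetaMellin_of_one_lt_re (hs : 1 < s.re) : riemannZeta s = zetaMellin s := by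
  have hs0 : s ≠ 0 := Complex.ne_zero_of_re_pos (one_pos.trans hs)
  have habel := LSeries_eq_mul_integral' (1 : ℕ → ℂ) zero_le_one hs
    (by simpa using isBigO_refl (fun n : ℕ ↦ (n : ℝ)) atTop)
  have hfloor : EqOn (fun x : ℝ ↦ ∑ k ∈ Finset.Icc 1 ⌊x⌋₊, (1 : ℕ → ℂ) k) (fun x ↦ (⌊x⌋₊ : ℂ))
      (Ioi 1) := fun x _ ↦ by simp
  rw [LSeries_one_eq_riemannZeta hs, ← tailMellin, tailMellin_congr hfloor, tailMellin_natFloor hs,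
    tailMellin_sawtooth (one_pos.trans hs)] at habel
  rw [habel, zetaMellin]
  field_simp

lemma differentiableAt_zetaMellin (hs : -1 < s.re) (hs1 : s ≠ 1) :
    DifferentiableAt ℂ zetaMellin s := by
  have hmellin : DifferentiableAt ℂ (tailMellin fun x ↦ (sawtoothPrimitive x : ℂ)) (s + 1) :=
    differentiableAt_tailMellin (aestronglyMeasurable_sawtoothPrimitive _)
      (sawtoothPrimitive_isBigO_one _) (by simp; linarith)
  have hcomp : DifferentiableAt ℂ
      (fun z ↦ tailMellin (fun x ↦ (sawtoothPrimitive x : ℂ)) (z + 1)) s :=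
    differentiableAt_comp_add_const.2 hmellin
  have hs1' : s - 1 ≠ 0 := sub_ne_zero.2 hs1
  unfold zetaMellin
  fun_prop (disch := assumption)

lemma convex_re_gt_inter_im_sameSign (a c : ℝ) : Convex ℝ {z : ℂ | a < z.re ∧ 0 < c * z.im} :=
  (convex_halfSpace_re_gt a).inter
    (convex_halfSpace_gt (f := fun z : ℂ ↦ c * z.im) (c • Complex.imLm).isLinear 0)

theorem riemannZeta_eq_zetaMellin (hs : -1 < s.re) (him : s.im ≠ 0) :
    riemannZeta s = zetaMellin s := by
  set U : Set ℂ := {z | -1 < z.re ∧ 0 < s.im * z.im} with hU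
  have hUo : IsOpen U := (isOpen_lt continuous_const Complex.continuous_re).inter
    (isOpen_lt continuous_const (continuous_const.mul Complex.continuous_im))
  have hne (z : ℂ) (hz : z ∈ U) : z ≠ 1 := by
    rintro rfl
    simp [hU] at hz
  have hzeta : AnalyticOnNhd ℂ riemannZeta U := DifferentiableOn.analyticOnNhd
    (fun z hz ↦ (differentiableAt_riemannZeta (hne z hz)).differentiableWithinAt) hUo
  have hmellin : AnalyticOnNhd ℂ zetaMellin U := DifferentiableOn.analyticOnNhd
    (fun z hz ↦ (differentiableAt_zetaMellin hz.1 (hne z hz)).differentiableWithinAt) hUo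
  have hs0 : 0 < s.im * s.im := mul_self_pos.2 him
  have hz₀ : (⟨2, s.im⟩ : ℂ) ∈ U := ⟨by norm_num, hs0⟩
  refine hzeta.eqOn_of_preconnected_of_eventuallyEq hmellin
    (convex_re_gt_inter_im_sameSign _ _).isPreconnected hz₀ ?_ ⟨hs, hs0⟩
  filter_upwards [(isOpen_lt continuous_const Complex.continuous_re).mem_nhds
    (show (1 : ℝ) < (⟨2, s.im⟩ : ℂ).re by norm_num)] with z hz
  exact riemannZeta_eq_zetaMellin_of_one_lt_re hz

end Zeta

section Holder

open Set
open scoped NNReal ENNReal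

lemma holderWith_tsum {ι X E : Type*} [PseudoEMetricSpace X] [NormedAddCommGroup E]
    {C : ι → ℝ≥0} {r : ℝ≥0} {f : ι → X → E} (hf : ∀ i, HolderWith (C i) r (f i)) (hC : Summable C)
    (hsum : ∀ x, Summable fun i ↦ f i x) : HolderWith (∑' i, C i) r fun x ↦ ∑' i, f i x := by
  intro x y
  calc edist (∑' i, f i x) (∑' i, f i y) = ‖∑' i, (f i x - f i y)‖ₑ := by
        rw [edist_eq_enorm_sub, (hsum x).tsum_sub (hsum y)]
    _ ≤ ∑' i, ‖f i x - f i y‖ₑ := enorm_tsum_le_tsum_enorm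
    _ ≤ ∑' i, (C i : ℝ≥0∞) * edist x y ^ (r : ℝ) := by
        gcongr with i
        rw [← edist_eq_enorm_sub]
        exact hf i x y
    _ = ((∑' i, C i : ℝ≥0) : ℝ≥0∞) * edist x y ^ (r : ℝ) := by
        rw [ENNReal.tsum_mul_right, ENNReal.coe_tsum hC]

lemma memHolder_mul {X A : Type*} [PseudoMetricSpace X] [CompactSpace X] [NormedRing A]
    {r : ℝ≥0} {f g : X → A} (hr : 0 < r) (hf : MemHolder r f) (hg : MemHolder r g) :
    MemHolder r fun x ↦ f x * g x := by
  obtain ⟨Cf, hCf⟩ := hf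
  obtain ⟨Cg, hCg⟩ := hg
  obtain ⟨Bf, hBf⟩ := (isCompact_range (hCf.continuous hr).nnnorm).bddAbove
  obtain ⟨Bg, hBg⟩ := (isCompact_range (hCg.continuous hr).nnnorm).bddAbove
  have enorm_mul_le (a b : A) : ‖a * b‖ₑ ≤ ‖a‖ₑ * ‖b‖ₑ := by
    simpa only [enorm, ← ENNReal.coe_mul, ENNReal.coe_le_coe] using nnnorm_mul_le a b
  refine ⟨Bf * Cg + Cf * Bg, fun x y ↦ ?_⟩
  calc edist (f x * g x) (f y * g y) = ‖f x * (g x - g y) + (f x - f y) * g y‖ₑ := by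
        rw [edist_eq_enorm_sub]
        congr 1
        noncomm_ring
    _ ≤ ‖f x * (g x - g y)‖ₑ + ‖(f x - f y) * g y‖ₑ := enorm_add_le _ _
    _ ≤ ‖f x‖ₑ * ‖g x - g y‖ₑ + ‖f x - f y‖ₑ * ‖g y‖ₑ :=
        add_le_add (enorm_mul_le _ _) (enorm_mul_le _ _)
    _ ≤ Bf * (Cg * edist x y ^ (r : ℝ)) + Cf * edist x y ^ (r : ℝ) * Bg := by
        rw [← edist_eq_enorm_sub, ← edist_eq_enorm_sub]
        gcongr
        · exact ENNReal.coe_le_coe.2 (hBf (mem_range_self x))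
        · exact hCg x y
        · exact hCf x y
        · exact ENNReal.coe_le_coe.2 (hBg (mem_range_self y))
    _ = ((Bf * Cg + Cf * Bg : ℝ≥0) : ℝ≥0∞) * edist x y ^ (r : ℝ) := by
        push_cast
        ring

lemma memHolder_domRestrict_of_contDiff {g : ℝ → ℝ} (hg : ContDiff ℝ 1 g) {K : Set ℝ}
    (hK : IsCompact K) {α : ℝ≥0} (hα : α ≤ 1) : MemHolder α (K.domRestrict g) := by
  have : CompactSpace K := isCompact_iff_compactSpace.1 hK
  obtain ⟨C, hC⟩ := hg.locallyLipschitz.locallyLipschitzOn.exists_lipschitzOnWith_of_compact hK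
  exact (HolderWith.restrict_iff.2 (holderOnWith_one.2 hC)).memHolder.of_le hα

lemma norm_coe_addCircle_of_mem_Ico {p x : ℝ} (hx : x ∈ Ico 0 p) :
    ‖(x : AddCircle p)‖ = min x (p - x) := by
  have hp : 0 < p := hx.1.trans_lt hx.2
  rcases le_total x (p / 2) with h | h
  · rw [(AddCircle.norm_coe_eq_abs_iff p hp.ne').2, abs_of_nonneg hx.1, min_eq_left (by linarith)]
    rwa [abs_of_nonneg hx.1, abs_of_pos hp]
  · have hsub : (x : AddCircle p) = ((x - p : ℝ) : AddCircle p) := by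
      rw [AddCircle.coe_sub, AddCircle.coe_period, sub_zero]
    have habs : |x - p| = p - x := abs_sub_comm x p ▸ abs_of_pos (sub_pos.2 hx.2)
    rw [hsub, (AddCircle.norm_coe_eq_abs_iff p hp.ne').2, habs, min_eq_right (by linarith)]
    rw [habs, abs_of_pos hp]
    linarith

lemma dist_coe_addCircle_of_mem_Ico {p u v : ℝ} (hu : u ∈ Ico 0 p) (hv : v ∈ Ico 0 p)
    (hvu : v ≤ u) : dist (u : AddCircle p) v = min (u - v) (p - (u - v)) := by
  rw [dist_eq_norm, ← AddCircle.coe_sub, norm_coe_addCircle_of_mem_Ico]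
  exact ⟨sub_nonneg.2 hvu, by linarith [hu.2, hv.1]⟩

/-- If the geodesic between two points passes through the base point, it is cut there; this costs
the factor `2` in the Hölder constant. -/
lemma memHolder_liftIco {E : Type*} [EMetricSpace E] {p : ℝ} [hp : Fact (0 < p)] {α : ℝ≥0}
    {g : ℝ → E} (hend : g 0 = g p) (hg : MemHolder α ((Icc 0 p).domRestrict g)) :
    MemHolder α (AddCircle.liftIco p 0 g) := by
  obtain ⟨C, hC⟩ := hg
  rw [HolderWith.restrict_iff] at hC
  have main (u v : ℝ) (hu : u ∈ Ico 0 p) (hv : v ∈ Ico 0 p) (hvu : v ≤ u) :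
      edist (g u) (g v) ≤ (2 * C : ℝ≥0) * edist (u : AddCircle p) v ^ (α : ℝ) := by
    have hdist := dist_coe_addCircle_of_mem_Ico hu hv hvu
    have hle (a b : ℝ) (hab : |a - b| ≤ dist (u : AddCircle p) v) (ha : a ∈ Icc 0 p)
        (hb : b ∈ Icc 0 p) : edist (g a) (g b) ≤ C * edist (u : AddCircle p) v ^ (α : ℝ) :=
      hC.edist_le_of_le ha hb (by
        rw [edist_dist, edist_dist, Real.dist_eq]
        exact ENNReal.ofReal_le_ofReal hab)
    have hu' := Ico_subset_Icc_self hu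
    have hv' := Ico_subset_Icc_self hv
    have h0 : 0 ∈ Icc 0 p := left_mem_Icc.2 hp.out.le
    have h1 : p ∈ Icc 0 p := right_mem_Icc.2 hp.out.le
    have htwo : ((2 * C : ℝ≥0) : ℝ≥0∞) = C + C := by rw [two_mul, ENNReal.coe_add]
    rw [htwo, add_mul]
    rcases le_total (u - v) (p - (u - v)) with h | h
    · rw [min_eq_left h] at hdist
      exact (hle u v (by rw [hdist, abs_of_nonneg (sub_nonneg.2 hvu)]) hu' hv').trans le_self_add
    · rw [min_eq_right h] at hdist
      refine (edist_triangle _ (g p) _).trans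
        (add_le_add (hle u p ?_ hu' h1) (hend ▸ hle 0 v ?_ h0 hv'))
      · rw [hdist, abs_sub_comm, abs_of_pos (sub_pos.2 hu.2)]
        linarith [hv.1]
      · rw [hdist, abs_sub_comm, abs_of_nonneg (by linarith [hv.1])]
        linarith [hu.2]
  refine ⟨2 * C, fun x y ↦ ?_⟩
  obtain ⟨u, hu, rfl⟩ := AddCircle.coe_image_Ico_eq p 0 ▸ mem_univ x
  obtain ⟨v, hv, rfl⟩ := AddCircle.coe_image_Ico_eq p 0 ▸ mem_univ y
  rw [zero_add] at hu hv
  rw [AddCircle.liftIco_zero_coe_apply hu, AddCircle.liftIco_zero_coe_apply hv]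
  rcases le_total v u with h | h
  · exact main u v hu hv h
  · rw [edist_comm, edist_comm (u : AddCircle p)]
    exact main v u hv hu h

end Holder

section Bernstein

open MeasureTheory AddCircle
open scoped NNReal

lemma norm_translate_sub_le_of_holderWith {T : ℝ} {f : AddCircle T → ℂ} {C α : ℝ≥0}
    (hf : HolderWith C α f) {x : ℝ} (hx : 0 ≤ x) (t : AddCircle T) :
    ‖f (t + x) - f t‖ ≤ C * x ^ (α : ℝ) := by
  rw [← dist_eq_norm]
  refine hf.dist_le_of_le ?_
  rw [dist_self_add_left]
  exact (QuotientAddGroup.norm_mk_le_norm (m := x)).trans_eq (Real.norm_of_nonneg hx)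

variable {T : ℝ} [hT : Fact (0 < T)] {f : AddCircle T → ℂ}

lemma fourierCoeff_comp_add_right (f : AddCircle T → ℂ) (δ : AddCircle T) (k : ℤ) :
    fourierCoeff (fun t ↦ f (t + δ)) k = fourier k δ * fourierCoeff f k := by
  have hcharacter (t : AddCircle T) :
      (fourier (-k) (t - δ) : ℂ) = fourier k δ * fourier (-k) t := by
    simp only [fourier_apply]
    rw [← Circle.coe_mul, ← toCircle_add, neg_smul, neg_smul, smul_sub]
    congr 2
    abel
  calc fourierCoeff (fun t ↦ f (t + δ)) k
      = ∫ t : AddCircle T, fourier (-k) (t + δ - δ) • f (t + δ) ∂haarAddCircle := by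
        simp only [fourierCoeff, add_sub_cancel_right]
    _ = ∫ t : AddCircle T, fourier (-k) (t - δ) • f t ∂haarAddCircle :=
        integral_add_right_eq_self (fun t ↦ fourier (-k) (t - δ) • f t) δ
    _ = fourier k δ * fourierCoeff f k := by
        simp only [hcharacter, smul_eq_mul, mul_assoc, integral_const_mul, fourierCoeff]

lemma fourierCoeff_translate_sub (hf : Continuous f) (δ : AddCircle T) (k : ℤ) :
    fourierCoeff (fun t ↦ f (t + δ) - f t) k = (fourier k δ - 1) * fourierCoeff f k := by
  have hint (g : AddCircle T → ℂ) (hg : Continuous g) :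
      Integrable (fun t ↦ fourier (-k) t • g t) haarAddCircle :=
    Continuous.integrable_of_hasCompactSupport (by fun_prop) (.of_compactSpace _)
  rw [sub_mul, one_mul, ← fourierCoeff_comp_add_right]
  simp only [fourierCoeff, smul_sub]
  exact integral_sub (hint _ (by fun_prop)) (hint _ hf)

lemma hasSum_sq_fourierCoeff_of_continuous (hf : Continuous f) :
    HasSum (fun k ↦ ‖fourierCoeff f k‖ ^ 2) (∫ t, ‖f t‖ ^ 2 ∂haarAddCircle) := by
  have hae : (fun t ↦ ‖ContinuousMap.toLp (E := ℂ) 2 haarAddCircle ℂ ⟨f, hf⟩ t‖ ^ 2)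
      =ᵐ[haarAddCircle] fun t ↦ ‖f t‖ ^ 2 := by
    filter_upwards [ContinuousMap.coeFn_toLp (p := 2) (𝕜 := ℂ) haarAddCircle ⟨f, hf⟩] with t ht
    rw [ht, ContinuousMap.coe_mk]
  rw [← integral_congr_ae hae]
  simpa only [fourierCoeff_toLp, ContinuousMap.coe_mk] using
    hasSum_sq_fourierCoeff (ContinuousMap.toLp (E := ℂ) 2 haarAddCircle ℂ ⟨f, hf⟩)

lemma summable_sq_fourier_sub_one_mul_fourierCoeff (hf : Continuous f) (δ : AddCircle T) :
    Summable fun k ↦ ‖fourier k δ - 1‖ ^ 2 * ‖fourierCoeff f k‖ ^ 2 := by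
  simp only [← mul_pow, ← norm_mul, ← fourierCoeff_translate_sub hf]
  exact (hasSum_sq_fourierCoeff_of_continuous (by fun_prop)).summable

lemma tsum_sq_fourier_sub_one_mul_fourierCoeff_le (hf : Continuous f) {δ : AddCircle T} {B : ℝ}
    (hB : ∀ t, ‖f (t + δ) - f t‖ ≤ B) :
    ∑' k, ‖fourier k δ - 1‖ ^ 2 * ‖fourierCoeff f k‖ ^ 2 ≤ B ^ 2 := by
  have hdiff : Continuous fun t ↦ f (t + δ) - f t := by fun_prop
  simp only [← mul_pow, ← norm_mul, ← fourierCoeff_translate_sub hf]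
  rw [(hasSum_sq_fourierCoeff_of_continuous hdiff).tsum_eq]
  calc ∫ t, ‖f (t + δ) - f t‖ ^ 2 ∂haarAddCircle ≤ ∫ _ : AddCircle T, B ^ 2 ∂haarAddCircle :=
        integral_mono
          (Continuous.integrable_of_hasCompactSupport (by fun_prop) (.of_compactSpace _))
          (integrable_const _) fun t ↦ pow_le_pow_left₀ (norm_nonneg _) (hB t) 2
    _ = B ^ 2 := by simp

lemma one_le_norm_fourier_coe_sub_one {k : ℤ} {x : ℝ} (h₁ : T / 4 ≤ |k * x|)
    (h₂ : |k * x| ≤ 3 * T / 4) : 1 ≤ ‖(fourier k (x : AddCircle T) : ℂ) - 1‖ := by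
  have hT0 := hT.out
  set θ : ℝ := 2 * Real.pi * (k * x) / T with hθ
  have habs : |θ| = 2 * Real.pi * |k * x| / T := by
    rw [hθ, abs_div, abs_mul, abs_of_pos Real.two_pi_pos, abs_of_pos hT0]
  have hcos : Real.cos θ ≤ 0 := by
    rw [← Real.cos_abs, habs]
    apply Real.cos_nonpos_of_pi_div_two_le_of_le
    · rw [le_div_iff₀ hT0]
      nlinarith [Real.pi_pos]
    · rw [div_le_iff₀ hT0]
      nlinarith [Real.pi_pos]
  have hre : ((fourier k (x : AddCircle T) : ℂ) - 1).re = Real.cos θ - 1 := by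
    rw [fourier_coe_apply, show 2 * (Real.pi : ℂ) * Complex.I * k * x / T = θ * Complex.I by
      rw [hθ]; push_cast; ring, Complex.sub_re, Complex.exp_ofReal_mul_I_re, Complex.one_re]
  calc 1 ≤ |((fourier k (x : AddCircle T) : ℂ) - 1).re| := by
        rw [hre, abs_of_nonpos (by linarith)]
        linarith
    _ ≤ ‖(fourier k (x : AddCircle T) : ℂ) - 1‖ := Complex.abs_re_le_norm _

lemma two_pow_log_natAbs_le {k : ℤ} (hk : k ≠ 0) : (2 : ℝ) ^ Nat.log 2 k.natAbs ≤ |(k : ℝ)| := by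
  rw [← Int.cast_abs, ← Nat.cast_natAbs]
  exact_mod_cast Nat.pow_log_le_self 2 (Int.natAbs_ne_zero.2 hk)

lemma abs_lt_two_pow_log_natAbs_succ (k : ℤ) :
    |(k : ℝ)| < (2 : ℝ) ^ (Nat.log 2 k.natAbs + 1) := by
  rw [← Int.cast_abs, ← Nat.cast_natAbs]
  exact_mod_cast Nat.lt_pow_succ_log_self one_lt_two _

/-- The translations by `T / 2 ^ (j + 2)` resolve the frequencies in the dyadic block
`2 ^ j ≤ |k| < 2 ^ (j + 1)`. -/
lemma one_le_norm_fourier_dyadic_sub_one {k : ℤ} (hk : k ≠ 0) :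
    1 ≤ ‖(fourier k ((T / 4 * (1 / 2) ^ Nat.log 2 k.natAbs : ℝ) : AddCircle T) : ℂ) - 1‖ := by
  set j := Nat.log 2 k.natAbs
  have hT0 := hT.out
  have hhalf : (2 : ℝ) ^ j * (1 / 2) ^ j = 1 := by rw [← mul_pow]; norm_num
  have hlower : 1 ≤ |(k : ℝ)| * (1 / 2) ^ j :=
    hhalf.symm.trans_le (mul_le_mul_of_nonneg_right (two_pow_log_natAbs_le hk) (by positivity))
  have hupper : |(k : ℝ)| * (1 / 2) ^ j ≤ 2 := calc
    |(k : ℝ)| * (1 / 2) ^ j ≤ 2 ^ (j + 1) * (1 / 2) ^ j := by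
        gcongr
        exact (abs_lt_two_pow_log_natAbs_succ k).le
    _ = 2 := by rw [pow_succ, mul_right_comm, hhalf, one_mul]
  have habs : |k * (T / 4 * (1 / 2) ^ j)| = T / 4 * (|(k : ℝ)| * (1 / 2) ^ j) := by
    rw [abs_mul, abs_of_pos (by positivity : 0 < T / 4 * (1 / 2) ^ j)]
    ring
  apply one_le_norm_fourier_coe_sub_one
  · rw [habs]
    nlinarith
  · rw [habs]
    nlinarith

lemma summable_diagonal_of_tsum_le_geometric {κ : Type*} {w : ℕ → κ → ℝ} (hw : ∀ j k, 0 ≤ w j k)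
    (hsum : ∀ j, Summable (w j)) {D r : ℝ} (hr0 : 0 ≤ r) (hr : r < 1)
    (hle : ∀ j, ∑' k, w j k ≤ D * r ^ j) (φ : κ → ℕ) : Summable fun k ↦ w (φ k) k := by
  have hprod : Summable fun x : ℕ × κ ↦ w x.1 x.2 := by
    rw [summable_prod_of_nonneg fun x ↦ hw _ _]
    exact ⟨hsum, .of_nonneg_of_le (fun j ↦ tsum_nonneg (hw j)) hle
      ((summable_geometric_of_lt_one hr0 hr).mul_left D)⟩
  exact hprod.comp_injective (i := fun k ↦ (φ k, k)) fun _ _ h ↦ (Prod.mk.inj h).2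

lemma summable_rpow_mul_sq_fourierCoeff {C α : ℝ≥0} {b : ℝ} (hf : HolderWith C α f)
    (hb0 : 0 ≤ b) (hb : b < 2 * α) :
    Summable fun k : ℤ ↦ |(k : ℝ)| ^ b * ‖fourierCoeff f k‖ ^ 2 := by
  have hT0 := hT.out
  have hα : 0 < α := by
    rw [← NNReal.coe_pos]
    linarith
  have hcont := hf.continuous hα
  let δ (j : ℕ) : ℝ := T / 4 * (1 / 2) ^ j
  let w (j : ℕ) (k : ℤ) : ℝ := (2 ^ (j + 1)) ^ b *
    (‖fourier k (δ j : AddCircle T) - 1‖ ^ 2 * ‖fourierCoeff f k‖ ^ 2)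
  set r : ℝ := 2 ^ b * ((1 / 2) ^ (α : ℝ)) ^ 2 with hr
  have hr1 : r < 1 := by
    rw [hr, ← Real.rpow_mul_natCast (by norm_num), one_div, Real.inv_rpow zero_le_two,
      ← Real.rpow_neg zero_le_two, ← Real.rpow_add two_pos]
    exact Real.rpow_lt_one_of_one_lt_of_neg one_lt_two (by push_cast; linarith)
  have htsum (j : ℕ) : ∑' k, w j k ≤ 2 ^ b * (C * (T / 4) ^ (α : ℝ)) ^ 2 * r ^ j := by
    have hδ : 0 ≤ δ j := by positivity
    calc ∑' k, w j k ≤ (2 ^ (j + 1)) ^ b * (C * δ j ^ (α : ℝ)) ^ 2 := by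
          rw [tsum_mul_left]
          gcongr
          exact tsum_sq_fourier_sub_one_mul_fourierCoeff_le hcont
            (norm_translate_sub_le_of_holderWith hf hδ)
      _ = 2 ^ b * (C * (T / 4) ^ (α : ℝ)) ^ 2 * r ^ j := by
          rw [Real.mul_rpow (by positivity) (by positivity), ← Real.rpow_pow_comm zero_le_two,
            ← Real.rpow_pow_comm (by norm_num : (0 : ℝ) ≤ 1 / 2), hr]
          ring
  have hdiag := summable_diagonal_of_tsum_le_geometric (fun j k ↦ by positivity)
    (fun j ↦ (summable_sq_fourier_sub_one_mul_fourierCoeff hcont _).mul_left _)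
    (by positivity) hr1 htsum fun k : ℤ ↦ Nat.log 2 k.natAbs
  refine .of_norm_bounded_eventually hdiag ?_
  filter_upwards [(Set.finite_singleton (0 : ℤ)).compl_mem_cofinite] with k hk
  rw [Real.norm_of_nonneg (by positivity)]
  gcongr
  · exact (abs_lt_two_pow_log_natAbs_succ k).le
  · exact le_mul_of_one_le_left (sq_nonneg _)
      (one_le_pow₀ (one_le_norm_fourier_dyadic_sub_one hk))

/-- **Bernstein's theorem** on absolute convergence of Fourier series. -/
theorem summable_fourierCoeff_of_holderWith {C α : ℝ≥0} (hf : HolderWith C α f) (hα : 1 / 2 < α) :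
    Summable (fourierCoeff f) := by
  have hα' : (1 / 2 : ℝ) < α := by exact_mod_cast hα
  obtain ⟨b, hb1, hb⟩ : ∃ b : ℝ, 1 < b ∧ b < 2 * α := exists_between (by linarith only [hα'])
  have hweighted := summable_rpow_mul_sq_fourierCoeff hf (zero_le_one.trans hb1.le) hb
  refine .of_norm_bounded_eventually
    (hweighted.add (Real.summable_abs_int_rpow hb1)) ?_
  filter_upwards [(Set.finite_singleton (0 : ℤ)).compl_mem_cofinite] with k hk
  have hk0 : 0 < |(k : ℝ)| := by simpa using hk
  have hw : 0 < |(k : ℝ)| ^ b := by positivity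
  rw [Real.rpow_neg hk0.le]
  set w := |(k : ℝ)| ^ b
  set c := ‖fourierCoeff f k‖
  have hsq : w * c ^ 2 + w⁻¹ - 2 * c = w * (c - w⁻¹) ^ 2 := by
    field_simp
    ring
  have hnonneg : 0 ≤ w * (c - w⁻¹) ^ 2 := by positivity
  linarith [norm_nonneg (fourierCoeff f k)]

end Bernstein

section Takagi

open Asymptotics
open scoped NNReal

/-- The Takagi-type function with ratio `β` built on the sawtooth primitive; every layer has
slope of order one, so it is Hölder of every exponent below `1`. -/
def takagi (β x : ℝ) : ℝ := ∑' r : ℕ, β⁻¹ ^ r * sawtoothPrimitive (β ^ r * x)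

variable {β : ℝ}

lemma norm_takagi_layer_le (hβ : 1 < β) (x : ℝ) (r : ℕ) :
    ‖β⁻¹ ^ r * sawtoothPrimitive (β ^ r * x)‖ ≤ β⁻¹ ^ r * (1 / 8) := by
  rw [norm_mul, Real.norm_of_nonneg (by positivity), Real.norm_eq_abs]
  gcongr
  exact abs_sawtoothPrimitive_le _

lemma summable_inv_pow (hβ : 1 < β) : Summable fun r : ℕ ↦ β⁻¹ ^ r :=
  summable_geometric_of_lt_one (by positivity) (inv_lt_one_of_one_lt₀ hβ)

lemma summable_takagi_layer (hβ : 1 < β) (x : ℝ) :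
    Summable fun r : ℕ ↦ β⁻¹ ^ r * sawtoothPrimitive (β ^ r * x) :=
  .of_norm_bounded ((summable_inv_pow hβ).mul_right _) (norm_takagi_layer_le hβ x)

lemma takagi_mul (hβ : 1 < β) (x : ℝ) :
    takagi β (β * x) = β * (takagi β x - sawtoothPrimitive x) := by
  have hβ0 : β ≠ 0 := by positivity
  rw [takagi, takagi, (summable_takagi_layer hβ x).tsum_eq_zero_add, pow_zero, pow_zero, one_mul,
    one_mul, add_sub_cancel_left, ← tsum_mul_left]
  congr 1 with r
  rw [← mul_assoc (β ^ r), ← pow_succ, pow_succ' β⁻¹, mul_assoc, mul_inv_cancel_left₀ hβ0]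

lemma takagi_isBigO_one (hβ : 1 < β) (l : Filter ℝ) :
    (fun x ↦ (takagi β x : ℂ)) =O[l] fun x ↦ x ^ (0 : ℝ) :=
  IsBigO.of_bound (∑' r : ℕ, β⁻¹ ^ r * (1 / 8)) <| .of_forall fun x ↦ by
    simpa only [takagi, Complex.norm_real, Real.rpow_zero, norm_one, mul_one] using
      tsum_of_norm_bounded ((summable_inv_pow hβ).mul_right _).hasSum (norm_takagi_layer_le hβ x)

lemma lipschitzWith_takagi_layer (hβ : 1 < β) (r : ℕ) :
    LipschitzWith 1 fun x ↦ β⁻¹ ^ r * sawtoothPrimitive (β ^ r * x) := by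
  have hβ0 : 0 < β := one_pos.trans hβ
  refine LipschitzWith.of_dist_le_mul fun x y ↦ ?_
  have hlip := lipschitzWith_sawtoothPrimitive.dist_le_mul (β ^ r * x) (β ^ r * y)
  simp only [NNReal.coe_one, one_mul, Real.dist_eq, ← mul_sub, abs_mul,
    abs_of_pos (pow_pos hβ0 r), abs_of_pos (pow_pos (inv_pos.2 hβ0) r)] at hlip ⊢
  calc β⁻¹ ^ r * |sawtoothPrimitive (β ^ r * x) - sawtoothPrimitive (β ^ r * y)|
      ≤ β⁻¹ ^ r * (β ^ r * |x - y|) := by gcongr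
    _ = |x - y| := by rw [← mul_assoc, ← mul_pow, inv_mul_cancel₀ hβ0.ne', one_pow, one_mul]

lemma holderWith_zero_takagi_layer (hβ : 1 < β) (r : ℕ) :
    HolderWith (β.toNNReal⁻¹ ^ r) 0 fun x ↦ β⁻¹ ^ r * sawtoothPrimitive (β ^ r * x) := by
  have hβ0 : 0 < β := one_pos.trans hβ
  intro x y
  rw [NNReal.coe_zero, ENNReal.rpow_zero, mul_one, edist_dist,
    ← ENNReal.ofReal_coe_nnreal]
  refine ENNReal.ofReal_le_ofReal ((dist_le_norm_add_norm _ _).trans ?_)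
  rw [NNReal.coe_pow, NNReal.coe_inv, Real.coe_toNNReal _ hβ0.le]
  have hpos : 0 < β⁻¹ ^ r := by positivity
  linarith [norm_takagi_layer_le hβ x r, norm_takagi_layer_le hβ y r]

/-- Interpolating between the supremum bound `β⁻¹ ^ r` and the Lipschitz bound `1` for the
`r`-th layer leaves a geometric series of Hölder constants. -/
lemma memHolder_takagi (hβ : 1 < β) {α : ℝ≥0} (hα : α < 1) : MemHolder α (takagi β) := by
  have hlayer (r : ℕ) : HolderWith ((β.toNNReal⁻¹ ^ (1 - α : ℝ)) ^ r) α
      fun x ↦ β⁻¹ ^ r * sawtoothPrimitive (β ^ r * x) := by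
    have hinterp := (holderWith_zero_takagi_layer hβ r).interpolate
      (holderWith_one.2 (lipschitzWith_takagi_layer hβ r)) (tsub_add_cancel_of_le hα.le)
    rwa [NNReal.one_rpow, mul_one, zero_mul, one_mul, zero_add, NNReal.coe_sub hα.le,
      NNReal.coe_one, ← NNReal.rpow_natCast, ← NNReal.rpow_mul, mul_comm, NNReal.rpow_mul,
      NNReal.rpow_natCast] at hinterp
  have hratio : β.toNNReal⁻¹ ^ (1 - α : ℝ) < 1 :=
    NNReal.rpow_lt_one (inv_lt_one_of_one_lt₀ (Real.one_lt_toNNReal.2 hβ))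
      (sub_pos.2 (by exact_mod_cast hα))
  exact (holderWith_tsum hlayer (NNReal.summable_geometric hratio)
    (summable_takagi_layer hβ)).memHolder

lemma continuous_takagi (hβ : 1 < β) : Continuous (takagi β) := by
  obtain ⟨C, hC⟩ := memHolder_takagi hβ (α := 1 / 2) (by norm_num)
  exact hC.continuous (by norm_num)

end Takagi

section LogPeriodic

open MeasureTheory Set Asymptotics

/-- The frequency `2πik / log β`, at which `x ^ s` has multiplicative period `β`. -/
def logFreq (β : ℝ) (k : ℤ) : ℂ := 2 * Real.pi * Complex.I * k / Real.log β

/-- The function with multiplicative period `β` that reads `f` on the logarithmic scale. -/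
def logPeriodic (β : ℝ) (f : UnitAddCircle → ℂ) (x : ℝ) : ℂ :=
  f ((Real.log x / Real.log β : ℝ) : UnitAddCircle)

/-- The Mellin integral of `logPeriodic β f` over the single period `[1, β]`. -/
def logPeriodMellin (β : ℝ) (f : UnitAddCircle → ℂ) (s : ℂ) : ℂ :=
  ∫ x in (1 : ℝ)..β, logPeriodic β f x * (x : ℂ) ^ (-(s + 1))

/-- The meromorphic continuation of the Mellin transform of `logPeriodic β f`: the integrals over
the periods `[β ^ n, β ^ (n + 1)]` form a geometric series of ratio `β ^ (-s)`. -/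
def logPeriodicContinuation (β : ℝ) (f : UnitAddCircle → ℂ) (s : ℂ) : ℂ :=
  logPeriodMellin β f s / (1 - (β : ℂ) ^ (-s))

variable {β : ℝ} {f : UnitAddCircle → ℂ} {k : ℤ} {s : ℂ}

lemma logFreq_re (β : ℝ) (k : ℤ) : (logFreq β k).re = 0 := by
  rw [logFreq, show 2 * Real.pi * Complex.I * k / Real.log β =
    ((2 * Real.pi * k / Real.log β : ℝ) : ℂ) * Complex.I by push_cast; ring,
    Complex.re_ofReal_mul, Complex.I_re, mul_zero]

lemma logFreq_mul_log (hβ : 1 < β) (k : ℤ) :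
    logFreq β k * Real.log β = 2 * Real.pi * Complex.I * k :=
  div_mul_cancel₀ _ (Complex.ofReal_ne_zero.2 (Real.log_pos hβ).ne')

lemma logFreq_ne_zero (hβ : 1 < β) (hk : k ≠ 0) : logFreq β k ≠ 0 := by
  refine left_ne_zero_of_mul (b := (Real.log β : ℂ)) ?_
  rw [logFreq_mul_log hβ]
  exact mul_ne_zero Complex.two_pi_I_ne_zero (Int.cast_ne_zero.2 hk)

lemma logFreq_im_ne_zero (hβ : 1 < β) (hk : k ≠ 0) : (logFreq β k).im ≠ 0 :=
  fun h ↦ logFreq_ne_zero hβ hk (Complex.ext (logFreq_re β k) h)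

lemma cpow_eq_one_iff_exists_logFreq (hβ : 1 < β) :
    (β : ℂ) ^ s = 1 ↔ ∃ k : ℤ, s = logFreq β k := by
  have hlog : (Real.log β : ℂ) ≠ 0 := Complex.ofReal_ne_zero.2 (Real.log_pos hβ).ne'
  rw [Complex.cpow_def_of_ne_zero (Complex.ofReal_ne_zero.2 (by positivity)),
    ← Complex.ofReal_log (by positivity), Complex.exp_eq_one_iff]
  refine exists_congr fun k ↦ ?_
  rw [logFreq, eq_div_iff hlog, mul_comm, mul_comm (k : ℂ)]

lemma cpow_logFreq (hβ : 1 < β) (k : ℤ) : (β : ℂ) ^ logFreq β k = 1 :=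
  (cpow_eq_one_iff_exists_logFreq hβ).2 ⟨k, rfl⟩

lemma logPeriodic_mul (hβ : 1 < β) (f : UnitAddCircle → ℂ) {x : ℝ} (hx : 0 < x) :
    logPeriodic β f (β * x) = logPeriodic β f x := by
  rw [logPeriodic, Real.log_mul (by positivity) hx.ne', add_div,
    div_self (Real.log_pos hβ).ne', add_comm, AddCircle.coe_add_period, logPeriodic]

lemma measurable_logPeriodic (β : ℝ) (hf : Continuous f) : Measurable (logPeriodic β f) :=
  (hf.comp (AddCircle.continuous_mk' 1)).measurable.comp (Real.measurable_log.div_const _)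

lemma logPeriodic_isBigO_one (β : ℝ) (hf : Continuous f) (l : Filter ℝ) :
    logPeriodic β f =O[l] fun x ↦ x ^ (0 : ℝ) := by
  obtain ⟨C, hC⟩ := (isCompact_range hf).isBounded.exists_norm_le
  exact IsBigO.of_bound C (.of_forall fun x ↦ by simpa [logPeriodic] using hC _ (mem_range_self _))

lemma tailMellinConvergent_logPeriodic (β : ℝ) (hf : Continuous f) (hs : 0 < s.re) :
    TailMellinConvergent (logPeriodic β f) s :=
  tailMellinConvergent_of_isBigO (measurable_logPeriodic β hf).aestronglyMeasurable
    (logPeriodic_isBigO_one β hf _) hs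

lemma cpow_neg_ne_one_of_re_pos (hβ : 1 < β) (hs : 0 < s.re) : (β : ℂ) ^ (-s) ≠ 1 := fun h ↦ by
  obtain ⟨k, hk⟩ := (cpow_eq_one_iff_exists_logFreq hβ).1 h
  have hre := congrArg Complex.re hk
  rw [logFreq_re, Complex.neg_re] at hre
  linarith

lemma tailMellin_logPeriodic (hβ : 1 < β) (hf : Continuous f) (hs : 0 < s.re) :
    tailMellin (logPeriodic β f) s = logPeriodicContinuation β f s := by
  have hperiod : EqOn (fun x ↦ logPeriodic β f (β * x)) (logPeriodic β f) (Ioi 1) :=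
    fun x hx ↦ logPeriodic_mul hβ f (one_pos.trans hx)
  rw [logPeriodicContinuation, logPeriodMellin,
    integral_one_eq_tailMellin_sub hβ.le (tailMellinConvergent_logPeriodic β hf hs),
    tailMellin_congr hperiod, eq_div_iff (sub_ne_zero.2 (cpow_neg_ne_one_of_re_pos hβ hs).symm)]
  ring

lemma logPeriodMellin_eq_tailMellin_indicator (hβ : 1 ≤ β) (f : UnitAddCircle → ℂ) (s : ℂ) :
    logPeriodMellin β f s = tailMellin ((Iic β).indicator (logPeriodic β f)) s := by
  have hmul (x : ℝ) : (Iic β).indicator (logPeriodic β f) x * (x : ℂ) ^ (-(s + 1)) =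
      (Iic β).indicator (fun y : ℝ ↦ logPeriodic β f y * (y : ℂ) ^ (-(s + 1))) x :=
    (indicator_mul_left (Iic β) _ fun y : ℝ ↦ (y : ℂ) ^ (-(s + 1))).symm
  simp only [logPeriodMellin, tailMellin, hmul]
  rw [setIntegral_indicator measurableSet_Iic, Ioi_inter_Iic,
    intervalIntegral.integral_of_le hβ]

lemma differentiable_logPeriodMellin (hβ : 1 ≤ β) (hf : Continuous f) :
    Differentiable ℂ (logPeriodMellin β f) := fun s ↦ by
  obtain ⟨C, hC⟩ := (isCompact_range hf).isBounded.exists_norm_le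
  rw [funext (logPeriodMellin_eq_tailMellin_indicator hβ f)]
  refine differentiableAt_tailMellin (r := -|s.re| - 1)
    ((measurable_logPeriodic β hf).indicator measurableSet_Iic).aestronglyMeasurable
    (isBigO_principal.2 ⟨C / β ^ (-|s.re| - 1), fun x hx ↦ ?_⟩)
    (by linarith [neg_abs_le s.re])
  have hx0 : 0 < x := one_pos.trans hx
  have hC0 : 0 ≤ C := (norm_nonneg _).trans (hC _ (mem_range_self 0))
  rw [Real.norm_of_nonneg (by positivity)]
  by_cases hxβ : x ∈ Iic β
  · have hpow : β ^ (-|s.re| - 1) ≤ x ^ (-|s.re| - 1) :=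
      Real.rpow_le_rpow_of_nonpos hx0 hxβ (by linarith [abs_nonneg s.re])
    rw [indicator_of_mem hxβ, div_mul_eq_mul_div, le_div_iff₀ (by positivity)]
    exact mul_le_mul (hC _ (mem_range_self _)) hpow (by positivity) hC0
  · rw [indicator_of_notMem hxβ, norm_zero]
    positivity

/-- The substitution `x = β ^ u` turns the period integral at `logFreq β k` into a Fourier
coefficient. -/
lemma logPeriodMellin_logFreq (hβ : 1 < β) (hf : Continuous f) (k : ℤ) :
    logPeriodMellin β f (logFreq β k) = Real.log β * fourierCoeff f k := by
  have hL : Real.log β ≠ 0 := (Real.log_pos hβ).ne'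
  have hpos (x : ℝ) (hx : x ∈ uIcc 1 β) : 0 < x := by
    rw [uIcc_of_le hβ.le] at hx
    exact one_pos.trans_le hx.1
  have hsubst := intervalIntegral.integral_deriv_smul_comp' (a := 1) (b := β)
    (f := fun x ↦ Real.log x / Real.log β) (f' := fun x ↦ x⁻¹ / Real.log β)
    (g := fun u : ℝ ↦ (fourier (-k) (u : UnitAddCircle) : ℂ) • f u)
    (fun x hx ↦ (Real.hasDerivAt_log (hpos x hx).ne').div_const _)
    ((continuousOn_inv₀.mono fun x hx ↦ (hpos x hx).ne').div_const _)
    (Continuous.continuousOn (by have := AddCircle.continuous_mk' (1 : ℝ); fun_prop))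
  simp only [Real.log_one, zero_div, div_self hL] at hsubst
  rw [fourierCoeff_eq_intervalIntegral f k 0, zero_add, div_one, one_smul, ← hsubst,
    ← intervalIntegral.integral_const_mul, logPeriodMellin]
  refine intervalIntegral.integral_congr fun x hx ↦ ?_
  have hx0 := hpos x hx
  have hxC : (x : ℂ) ≠ 0 := Complex.ofReal_ne_zero.2 hx0.ne'
  have hfourier : fourier (-k) ((Real.log x / Real.log β : ℝ) : UnitAddCircle) =
      (x : ℂ) ^ (-logFreq β k) := by
    rw [fourier_coe_apply, Complex.cpow_def_of_ne_zero hxC, ← Complex.ofReal_log hx0.le, logFreq]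
    congr 1
    push_cast
    ring
  have hLC : (Real.log β : ℂ) ≠ 0 := Complex.ofReal_ne_zero.2 hL
  simp only [Function.comp_apply, hfourier, logPeriodic]
  rw [neg_add, Complex.cpow_add _ _ hxC, Complex.cpow_neg_one, Complex.real_smul, smul_eq_mul]
  push_cast
  field_simp

lemma differentiableAt_logPeriodicContinuation (hβ : 1 < β) (hf : Continuous f)
    (hs : ∀ k, s ≠ logFreq β k) : DifferentiableAt ℂ (logPeriodicContinuation β f) s := by
  have hβ0 : (β : ℂ) ≠ 0 := Complex.ofReal_ne_zero.2 (by positivity)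
  refine (differentiable_logPeriodMellin hβ.le hf s).div
    ((differentiableAt_id.neg.const_cpow (.inl hβ0)).const_sub 1) (sub_ne_zero.2 fun h ↦ ?_)
  obtain ⟨k, hk⟩ := (cpow_eq_one_iff_exists_logFreq hβ).1
    (by rw [← inv_eq_one, ← Complex.cpow_neg]; exact h.symm)
  exact hs k hk

lemma tendsto_sub_logFreq_mul_logPeriodicContinuation (hβ : 1 < β) (hf : Continuous f) (k : ℤ) :
    Tendsto (fun s ↦ (s - logFreq β k) * logPeriodicContinuation β f s) (𝓝[≠] logFreq β k)
      (𝓝 (fourierCoeff f k)) := by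
  have hβ0 : (β : ℂ) ≠ 0 := Complex.ofReal_ne_zero.2 (by positivity)
  have hlog : (Real.log β : ℂ) ≠ 0 := Complex.ofReal_ne_zero.2 (Real.log_pos hβ).ne'
  have hpole : (β : ℂ) ^ (-logFreq β k) = 1 := by rw [Complex.cpow_neg, cpow_logFreq hβ, inv_one]
  have hderiv : HasDerivAt (fun s ↦ 1 - (β : ℂ) ^ (-s)) (Real.log β : ℂ) (logFreq β k) := by
    refine (((hasDerivAt_neg _).const_cpow (.inl hβ0)).const_sub 1).congr_deriv ?_
    rw [hpole, ← Complex.ofReal_log (by positivity)]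
    ring
  have hperiod := ((differentiable_logPeriodMellin hβ.le hf).continuous.tendsto _).mono_left
    (nhdsWithin_le_nhds (a := logFreq β k) (s := {logFreq β k}ᶜ))
  have hlim := ((hasDerivAt_iff_tendsto_slope.1 hderiv).inv₀ hlog).mul hperiod
  rw [logPeriodMellin_logFreq hβ hf, inv_mul_cancel_left₀ hlog] at hlim
  refine hlim.congr fun s ↦ ?_
  rw [slope_def_field, hpole, sub_self, sub_zero, inv_div, logPeriodicContinuation]
  ring

end LogPeriodic

section DelangeCircle

open MeasureTheory Set
open scoped NNReal

variable {β : ℝ} {k : ℤ}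

lemma intervalIntegrable_mul_cpow (hβ : 1 ≤ β) {g : ℝ → ℂ} (hg : ContinuousOn g (Icc 1 β)) (s : ℂ) :
    IntervalIntegrable (fun x : ℝ ↦ g x * (x : ℂ) ^ s) volume 1 β := by
  refine ContinuousOn.intervalIntegrable ?_
  rw [uIcc_of_le hβ]
  exact hg.mul fun x hx ↦ (Complex.continuousAt_ofReal_cpow_const _ _
    (.inr (one_pos.trans_le hx.1).ne')).continuousWithinAt

lemma integral_cpow_logFreq (hβ : 1 < β) (hk : k ≠ 0) :
    ∫ x in (1 : ℝ)..β, (x : ℂ) ^ (-(logFreq β k + 1)) = 0 := by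
  have h0 : (0 : ℝ) ∉ uIcc 1 β := by simp [uIcc_of_le hβ.le]
  rw [integral_cpow (.inr ⟨by simpa using logFreq_ne_zero hβ hk, h0⟩), neg_add,
    neg_add_cancel_right, Complex.cpow_neg, cpow_logFreq hβ]
  simp

lemma integral_id_mul_cpow_logFreq (hβ : 1 < β) (k : ℤ) :
    ∫ x in (1 : ℝ)..β, (x : ℂ) * (x : ℂ) ^ (-(logFreq β k + 1)) =
      (β - 1) / (1 - logFreq β k) := by
  have hβ0 : (β : ℂ) ≠ 0 := Complex.ofReal_ne_zero.2 (by positivity)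
  have hcongr : EqOn (fun x : ℝ ↦ (x : ℂ) * (x : ℂ) ^ (-(logFreq β k + 1)))
      (fun x : ℝ ↦ (x : ℂ) ^ (-logFreq β k)) (uIcc 1 β) := fun x hx ↦ by
    rw [uIcc_of_le hβ.le] at hx
    have hx0 : (x : ℂ) ≠ 0 := Complex.ofReal_ne_zero.2 (one_pos.trans_le hx.1).ne'
    simp only [neg_add', Complex.cpow_sub _ _ hx0, Complex.cpow_one, mul_div_cancel₀ _ hx0]
  rw [intervalIntegral.integral_congr hcongr, integral_cpow (.inl (by simp [logFreq_re])),
    Complex.cpow_add _ _ hβ0, Complex.cpow_neg, cpow_logFreq hβ, neg_add_eq_sub]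
  simp

lemma integral_log_mul_cpow_logFreq (hβ : 1 < β) (hk : k ≠ 0) :
    ∫ x in (1 : ℝ)..β, (Real.log x : ℂ) * (x : ℂ) ^ (-(logFreq β k + 1)) =
      -Real.log β / logFreq β k := by
  have hw := logFreq_ne_zero hβ hk
  have hpos (x : ℝ) (hx : x ∈ uIcc 1 β) : x ≠ 0 := by
    rw [uIcc_of_le hβ.le] at hx
    exact (one_pos.trans_le hx.1).ne'
  have hpow (x : ℝ) (hx : x ∈ uIcc 1 β) : HasDerivAt
      (fun y : ℝ ↦ (y : ℂ) ^ (-logFreq β k) / -logFreq β k) ((x : ℂ) ^ (-(logFreq β k + 1))) x :=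
    ((hasDerivAt_ofReal_cpow_const (hpos x hx) (neg_ne_zero.2 hw)).div_const _).congr_deriv <| by
      rw [mul_div_cancel_left₀ _ (neg_ne_zero.2 hw), neg_add']
  have hremainder : ∫ x in (1 : ℝ)..β,
      ((x⁻¹ : ℝ) : ℂ) * ((x : ℂ) ^ (-logFreq β k) / -logFreq β k) = 0 := by
    rw [← zero_div (-logFreq β k), ← integral_cpow_logFreq hβ hk,
      ← intervalIntegral.integral_div]
    refine intervalIntegral.integral_congr fun x hx ↦ ?_
    simp only [neg_add', Complex.cpow_sub _ _ (Complex.ofReal_ne_zero.2 (hpos x hx)),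
      Complex.cpow_one, Complex.ofReal_inv]
    ring
  have hparts := intervalIntegral.integral_mul_deriv_eq_deriv_mul (a := 1) (b := β)
    (fun x hx ↦ (Real.hasDerivAt_log (hpos x hx)).ofReal_comp) hpow
    (ContinuousOn.intervalIntegrable (Complex.continuous_ofReal.comp_continuousOn
      (continuousOn_inv₀.mono hpos)))
    (by simpa using intervalIntegrable_mul_cpow hβ.le (continuousOn_const (c := 1)) _)
  rw [hparts, hremainder, Complex.cpow_neg, cpow_logFreq hβ]
  simp [div_eq_mul_inv]

lemma integral_takagi_mul_cpow_logFreq (hβ : 1 < β) (k : ℤ) :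
    ∫ x in (1 : ℝ)..β, (takagi β x : ℂ) * (x : ℂ) ^ (-(logFreq β k + 1 + 1)) =
      tailMellin (fun x ↦ (sawtoothPrimitive x : ℂ)) (logFreq β k + 1) := by
  have hβ0 : (β : ℂ) ≠ 0 := Complex.ofReal_ne_zero.2 (by positivity)
  have hre : 0 < (logFreq β k + 1).re := by simp [logFreq_re]
  have htakagi : TailMellinConvergent (fun x ↦ (takagi β x : ℂ)) (logFreq β k + 1) :=
    tailMellinConvergent_of_isBigO
      (Complex.continuous_ofReal.comp (continuous_takagi hβ)).aestronglyMeasurable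
      (takagi_isBigO_one hβ _) hre
  have hsawtooth := tailMellinConvergent_of_isBigO
    (aestronglyMeasurable_sawtoothPrimitive _) (sawtoothPrimitive_isBigO_one _) hre
  have hscale : (fun x ↦ (takagi β (β * x) : ℂ)) =
      fun x ↦ (β : ℂ) * (takagi β x - sawtoothPrimitive x) := by
    ext x
    rw [takagi_mul hβ]
    push_cast
    rfl
  rw [integral_one_eq_tailMellin_sub hβ.le htakagi, hscale, tailMellin_const_mul, neg_add',
    Complex.cpow_sub _ _ hβ0, Complex.cpow_neg, cpow_logFreq hβ, Complex.cpow_one]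
  rw [tailMellin_sub htakagi hsawtooth]
  field_simp
  ring

/-- The closed form of Trollope–Delange type for `h_β` on the period `[0, 1]`, up to an additive
constant. -/
def delangeProfile (β u : ℝ) : ℝ :=
  (β - 1) * (takagi β (β ^ u) * β ^ (-u)) + (β ^ u - (β - 1) * u) / 2

lemma delangeProfile_zero_eq_one (hβ : 1 < β) : delangeProfile β 0 = delangeProfile β 1 := by
  have hβ0 : β ≠ 0 := by positivity
  have hT : takagi β β = β * takagi β 1 := by
    simpa [sawtoothPrimitive_one] using takagi_mul hβ 1
  simp only [delangeProfile, neg_zero, Real.rpow_zero, Real.rpow_one, Real.rpow_neg_one, hT]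
  field_simp
  ring

lemma memHolder_delangeProfile (hβ : 1 < β) {α : ℝ≥0} (hα0 : 0 < α) (hα1 : α < 1) :
    MemHolder α ((Icc 0 1).domRestrict (delangeProfile β)) := by
  have hβ0 : β ≠ 0 := by positivity
  have hpow : ContDiff ℝ 1 fun u : ℝ ↦ β ^ u := contDiff_const.rpow contDiff_id fun _ ↦ hβ0
  have htakagi : MemHolder α ((Icc 0 1).domRestrict fun u : ℝ ↦ takagi β (β ^ u)) := by
    have hcomp := (memHolder_domRestrict_of_contDiff hpow (isCompact_Icc (a := 0) (b := 1))
      le_rfl).comp (memHolder_takagi hβ hα1)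
    rwa [mul_one] at hcomp
  have hinv := memHolder_domRestrict_of_contDiff (hpow.comp contDiff_neg)
    (isCompact_Icc (a := (0 : ℝ)) (b := 1)) hα1.le
  have hsmooth := memHolder_domRestrict_of_contDiff
    ((hpow.sub ((contDiff_const (c := β - 1)).mul contDiff_id)).div_const 2)
    (isCompact_Icc (a := (0 : ℝ)) (b := 1)) hα1.le
  exact ((memHolder_mul hα0 htakagi hinv).smul (c := β - 1)).add hsmooth

lemma continuousOn_delangeProfile (hβ : 1 < β) : ContinuousOn (delangeProfile β) (Icc 0 1) := by
  obtain ⟨C, hC⟩ := memHolder_delangeProfile hβ (α := 1 / 2) (by norm_num) (by norm_num)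
  exact continuousOn_iff_continuous_domRestrict.2 (hC.continuous (by norm_num))

/-- The additive constant that gives the profile the mean value `c_β(0)`. -/
def delangeShift (β : ℝ) : ℂ := delangeCoeff β 0 - ∫ u in (0 : ℝ)..1, (delangeProfile β u : ℂ)

/-- `h_β` as a function on the circle, given by its closed form; `delangeH_eq_delangeCircle`
identifies it with the Fourier series. -/
def delangeCircle (β : ℝ) : UnitAddCircle → ℂ :=
  AddCircle.liftIco 1 0 fun u ↦ (delangeProfile β u : ℂ) + delangeShift β

lemma memHolder_delangeCircle (hβ : 1 < β) {α : ℝ≥0} (hα0 : 0 < α) (hα1 : α < 1) :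
    MemHolder α (delangeCircle β) := by
  have hisometry : Isometry fun x : ℝ ↦ (x : ℂ) + delangeShift β :=
    (isometry_add_right _).comp Complex.isometry_ofReal
  refine memHolder_liftIco (by rw [delangeProfile_zero_eq_one hβ]) ?_
  have hcomp :=
    (memHolder_delangeProfile hβ hα0 hα1).comp (holderWith_one.2 hisometry.lipschitz).memHolder
  rwa [one_mul] at hcomp

lemma continuous_delangeCircle (hβ : 1 < β) : Continuous (delangeCircle β) := by
  obtain ⟨C, hC⟩ := memHolder_delangeCircle hβ (α := 1 / 2) (by norm_num) (by norm_num)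
  exact hC.continuous (by norm_num)

lemma delangeCircle_coe (hβ : 1 < β) {u : ℝ} (hu : u ∈ Icc 0 1) :
    delangeCircle β u = delangeProfile β u + delangeShift β := by
  rcases hu.2.lt_or_eq with h1 | rfl
  · exact AddCircle.liftIco_zero_coe_apply ⟨hu.1, h1⟩
  · rw [AddCircle.coe_period, ← delangeProfile_zero_eq_one hβ]
    exact AddCircle.liftIco_zero_coe_apply ⟨le_rfl, one_pos⟩

lemma logPeriodic_delangeCircle (hβ : 1 < β) {x : ℝ} (hx : x ∈ Icc 1 β) :
    logPeriodic β (delangeCircle β) x = (β - 1) * (takagi β x * (x : ℂ)⁻¹) + 1 / 2 * x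
      - (β - 1) / (2 * Real.log β) * Real.log x + delangeShift β := by
  have hx0 : 0 < x := one_pos.trans_le hx.1
  have hpow : β ^ (Real.log x / Real.log β) = x := by
    rw [Real.log_div_log, Real.rpow_logb (by positivity) hβ.ne' hx0]
  have hmem : Real.log x / Real.log β ∈ Icc 0 1 :=
    ⟨div_nonneg (Real.log_nonneg hx.1) (Real.log_pos hβ).le,
      (div_le_one (Real.log_pos hβ)).2 (Real.log_le_log hx0 hx.2)⟩
  rw [logPeriodic, delangeCircle_coe hβ hmem, delangeProfile, Real.rpow_neg (by positivity), hpow]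
  push_cast
  ring

lemma logPeriodMellin_delangeCircle (hβ : 1 < β) (hk : k ≠ 0) :
    logPeriodMellin β (delangeCircle β) (logFreq β k) =
      (β - 1) * (tailMellin (fun x ↦ (sawtoothPrimitive x : ℂ)) (logFreq β k + 1)
        + 1 / (2 * (1 - logFreq β k)) + 1 / (2 * logFreq β k)) := by
  have hL : (Real.log β : ℂ) ≠ 0 := Complex.ofReal_ne_zero.2 (Real.log_pos hβ).ne'
  have hcongr : EqOn
      (fun x : ℝ ↦ logPeriodic β (delangeCircle β) x * (x : ℂ) ^ (-(logFreq β k + 1)))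
      (fun x : ℝ ↦ (β - 1) * (takagi β x * (x : ℂ) ^ (-(logFreq β k + 1 + 1)))
        + 1 / 2 * (x * (x : ℂ) ^ (-(logFreq β k + 1)))
        - (β - 1) / (2 * Real.log β) * (Real.log x * (x : ℂ) ^ (-(logFreq β k + 1)))
        + delangeShift β * (1 * (x : ℂ) ^ (-(logFreq β k + 1)))) (uIcc 1 β) := fun x hx ↦ by
    rw [uIcc_of_le hβ.le] at hx
    have hx0 : (x : ℂ) ≠ 0 := Complex.ofReal_ne_zero.2 (one_pos.trans_le hx.1).ne'
    simp only [logPeriodic_delangeCircle hβ hx]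
    rw [neg_add' (logFreq β k + 1), Complex.cpow_sub _ _ hx0, Complex.cpow_one]
    ring
  have htakagi := (intervalIntegrable_mul_cpow hβ.le (Complex.continuous_ofReal.comp
    (continuous_takagi hβ)).continuousOn (-(logFreq β k + 1 + 1))).const_mul ((β : ℂ) - 1)
  have hid := (intervalIntegrable_mul_cpow hβ.le Complex.continuous_ofReal.continuousOn
    (-(logFreq β k + 1))).const_mul (1 / 2)
  have hlog := (intervalIntegrable_mul_cpow hβ.le (Complex.continuous_ofReal.comp_continuousOn
    (Real.continuousOn_log.mono fun x hx ↦ (one_pos.trans_le hx.1).ne'))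
    (-(logFreq β k + 1))).const_mul (((β : ℂ) - 1) / (2 * Real.log β))
  have hone := (intervalIntegrable_mul_cpow hβ.le continuousOn_const
    (-(logFreq β k + 1)) (g := fun _ ↦ 1)).const_mul (delangeShift β)
  simp only [Function.comp_apply] at htakagi hlog
  rw [logPeriodMellin, intervalIntegral.integral_congr hcongr,
    intervalIntegral.integral_add ((htakagi.add hid).sub hlog) hone,
    intervalIntegral.integral_sub (htakagi.add hid) hlog,
    intervalIntegral.integral_add htakagi hid]
  simp only [intervalIntegral.integral_const_mul, one_mul, integral_takagi_mul_cpow_logFreq hβ,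
    integral_id_mul_cpow_logFreq hβ, integral_log_mul_cpow_logFreq hβ hk,
    integral_cpow_logFreq hβ hk]
  field_simp
  ring

lemma fourierCoeff_delangeCircle_zero (hβ : 1 < β) :
    fourierCoeff (delangeCircle β) 0 = delangeCoeff β 0 := by
  have hcongr : EqOn (fun u : ℝ ↦ delangeCircle β u)
      (fun u ↦ delangeProfile β u + delangeShift β) (uIcc 0 1) := fun u hu ↦
    delangeCircle_coe hβ (by rwa [uIcc_of_le zero_le_one] at hu)
  have hint : IntervalIntegrable (fun u ↦ (delangeProfile β u : ℂ)) volume 0 1 :=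
    ContinuousOn.intervalIntegrable <| by
      rw [uIcc_of_le zero_le_one]
      exact Complex.continuous_ofReal.comp_continuousOn (continuousOn_delangeProfile hβ)
  simp only [fourierCoeff_eq_intervalIntegral _ _ 0, neg_zero, fourier_zero, one_smul, zero_add,
    div_one]
  rw [intervalIntegral.integral_congr hcongr, intervalIntegral.integral_add hint (by simp),
    intervalIntegral.integral_const, sub_zero, one_smul, delangeShift, add_sub_cancel]

theorem fourierCoeff_delangeCircle (hβ : 1 < β) (k : ℤ) :
    fourierCoeff (delangeCircle β) k = delangeCoeff β k := by
  obtain rfl | hk := eq_or_ne k 0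
  · exact fourierCoeff_delangeCircle_zero hβ
  have hre (z : ℂ) (hz : z.re ≠ 0) : z ≠ 0 := fun h ↦ hz (by rw [h, Complex.zero_re])
  have hw := logFreq_ne_zero hβ hk
  have hadd : 1 + logFreq β k ≠ 0 := hre _ (by simp [logFreq_re])
  have hsub : 1 - logFreq β k ≠ 0 := hre _ (by simp [logFreq_re])
  have hsub' : logFreq β k - 1 ≠ 0 := hre _ (by simp [logFreq_re])
  have hL : (Real.log β : ℂ) ≠ 0 := Complex.ofReal_ne_zero.2 (Real.log_pos hβ).ne'
  have hmellin := logPeriodMellin_logFreq hβ (continuous_delangeCircle hβ) k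
  rw [logPeriodMellin_delangeCircle hβ hk] at hmellin
  rw [delangeCoeff, if_neg hk, ← logFreq_mul_log hβ, mul_div_cancel_right₀ _ hL,
    riemannZeta_eq_zetaMellin (by simp [logFreq_re]) (logFreq_im_ne_zero hβ hk), zetaMellin,
    ← mul_right_inj' hL, ← hmellin]
  field_simp
  ring

theorem delangeH_eq_delangeCircle (hβ : 1 < β) (u : ℝ) : delangeH β u = delangeCircle β u := by
  obtain ⟨C, hC⟩ := memHolder_delangeCircle hβ (α := 3 / 4) (by norm_num) (by norm_num)
  have hsum := summable_fourierCoeff_of_holderWith hC (by norm_num)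
  have hseries : HasSum (fun k ↦ fourierCoeff (delangeCircle β) k • fourier k (u : UnitAddCircle))
      (delangeCircle β u) := has_pointwise_sum_fourier_series_of_summable
    (f := ⟨delangeCircle β, continuous_delangeCircle hβ⟩) hsum u
  rw [delangeH, ← hseries.tsum_eq]
  congr 1 with k
  rw [fourierCoeff_delangeCircle hβ, fourier_coe_apply, smul_eq_mul,
    Complex.ofReal_one, div_one]

end DelangeCircle

section UnitSteps

open MeasureTheory Set Asymptotics

/-- The pairs `(x, y)` with `1 < x ≤ y ≤ x + 1`. -/
def unitSteps : Set (ℝ × ℝ) := {p | 1 < p.1 ∧ p.1 ≤ p.2 ∧ p.2 ≤ p.1 + 1}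

/-- The error in approximating `S x` by the sum of the forward differences
`S (n + 1) - S n` over `1 ≤ n ≤ x`. -/
def stepError (S : ℝ → ℂ) (x : ℝ) : ℂ := S (⌊x⌋₊ + 1) - S 1 - S x

variable {S : ℝ → ℂ} {ε : ℝ} {s : ℂ}

lemma measurable_stepError (hS : Measurable S) : Measurable (stepError S) := by
  have hstep : Measurable fun x : ℝ ↦ S (⌊x⌋₊ + 1) :=
    (measurable_from_nat (f := fun n : ℕ ↦ S (n + 1))).comp Nat.measurable_floor
  exact (hstep.sub_const _).sub hS

lemma rpow_isBigO_rpow {δ : ℝ} (h : δ ≤ ε) :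
    (fun x : ℝ ↦ x ^ δ) =O[𝓟 (Ioi 1)] fun x ↦ x ^ ε :=
  isBigO_principal.2 ⟨1, fun x hx ↦ by
    have hx0 : 0 < x := one_pos.trans hx
    rw [one_mul, Real.norm_of_nonneg (by positivity), Real.norm_of_nonneg (by positivity)]
    exact Real.rpow_le_rpow_of_exponent_le (le_of_lt hx) h⟩

lemma const_isBigO_rpow (c : ℂ) (hε : 0 ≤ ε) : (fun _ : ℝ ↦ c) =O[𝓟 (Ioi 1)] fun x ↦ x ^ ε := by
  refine IsBigO.trans ?_ (rpow_isBigO_rpow hε)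
  simpa only [Real.rpow_zero] using isBigO_const_const c one_ne_zero (𝓟 (Ioi (1 : ℝ)))

lemma stepError_isBigO (hε : 0 ≤ ε)
    (hS : (fun p : ℝ × ℝ ↦ S p.2 - S p.1) =O[𝓟 unitSteps] fun p ↦ p.1 ^ ε) :
    stepError S =O[𝓟 (Ioi 1)] fun x ↦ x ^ ε := by
  have hmaps : Tendsto (fun x : ℝ ↦ (x, (⌊x⌋₊ + 1 : ℝ))) (𝓟 (Ioi 1)) (𝓟 unitSteps) :=
    tendsto_principal_principal.2 fun x hx ↦ ⟨hx, (Nat.lt_floor_add_one x).le,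
      by simpa using Nat.floor_le (one_pos.trans hx).le⟩
  refine ((hS.comp_tendsto hmaps).sub (const_isBigO_rpow (S 1) hε)).congr_left fun x ↦ ?_
  simp only [stepError, Function.comp_apply]
  ring

lemma sum_fwdDiff_eq_add_stepError (S : ℝ → ℂ) (x : ℝ) :
    ∑ k ∈ Finset.Icc 1 ⌊x⌋₊, fwdDiff 1 S k = S x + stepError S x := by
  have htelescope := Finset.sum_Ico_sub (fun k : ℕ ↦ S k) (Nat.le_add_left 1 ⌊x⌋₊)
  simp only [Finset.Ico_add_one_right_eq_Icc, Nat.cast_add, Nat.cast_one] at htelescope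
  simp only [fwdDiff, stepError, htelescope]
  ring

lemma sum_fwdDiff_isBigO (hε : 0 ≤ ε) (hgrowth : S =O[𝓟 (Ioi 1)] fun x ↦ x ^ (1 + ε))
    (hstep : (fun p : ℝ × ℝ ↦ S p.2 - S p.1) =O[𝓟 unitSteps] fun p ↦ p.1 ^ ε) :
    (fun n : ℕ ↦ ∑ k ∈ Finset.Icc 1 n, fwdDiff 1 S k) =O[atTop] fun n ↦ (n : ℝ) ^ (1 + ε) := by
  have hcast : Tendsto (fun n : ℕ ↦ (n : ℝ)) atTop (𝓟 (Ioi 1)) :=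
    tendsto_principal.2 ((eventually_gt_atTop 1).mono fun n hn ↦
      mem_Ioi.2 (Nat.one_lt_cast.2 hn))
  have herror : stepError S =O[𝓟 (Ioi 1)] fun x ↦ x ^ (1 + ε) :=
    (stepError_isBigO hε hstep).trans (rpow_isBigO_rpow (by linarith))
  refine ((hgrowth.add herror).comp_tendsto hcast).congr_left fun n ↦ ?_
  rw [Function.comp_apply, ← sum_fwdDiff_eq_add_stepError, Nat.floor_natCast]

lemma LSeriesSummable_fwdDiff (hs : 1 + ε < s.re)
    (hstep : (fun p : ℝ × ℝ ↦ S p.2 - S p.1) =O[𝓟 unitSteps] fun p ↦ p.1 ^ ε) :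
    LSeriesSummable (fun n : ℕ ↦ fwdDiff 1 S n) s := by
  have hpair : Tendsto (fun n : ℕ ↦ ((n : ℝ), (n + 1 : ℝ))) atTop (𝓟 unitSteps) :=
    tendsto_principal.2 ((eventually_gt_atTop 1).mono fun n hn ↦
      ⟨Nat.one_lt_cast.2 hn, by simp, le_rfl⟩)
  refine LSeriesSummable_of_isBigO_rpow hs ?_
  rw [add_sub_cancel_left]
  exact hstep.comp_tendsto hpair

/-- Abel summation, with the step function `S (⌊x⌋ + 1) - S 1` split into `S` and its error. -/
theorem LSeries_fwdDiff (hε : 0 ≤ ε) (hs : 1 + ε < s.re) (hS : Measurable S)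
    (hgrowth : S =O[𝓟 (Ioi 1)] fun x ↦ x ^ (1 + ε))
    (hstep : (fun p : ℝ × ℝ ↦ S p.2 - S p.1) =O[𝓟 unitSteps] fun p ↦ p.1 ^ ε) :
    LSeries (fun n : ℕ ↦ fwdDiff 1 S n) s = s * (tailMellin S s + tailMellin (stepError S) s) := by
  have hS_conv := tailMellinConvergent_of_isBigO hS.aestronglyMeasurable hgrowth hs
  have herror_conv := tailMellinConvergent_of_isBigO (measurable_stepError hS).aestronglyMeasurable
    (stepError_isBigO hε hstep) (by linarith : ε < s.re)
  rw [LSeries_eq_mul_integral _ (by linarith) hs (LSeriesSummable_fwdDiff hs hstep)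
    (sum_fwdDiff_isBigO hε hgrowth hstep), ← tailMellin_add hS_conv herror_conv]
  simp only [sum_fwdDiff_eq_add_stepError, tailMellin]

lemma LSeries_eq_tsum_succ (f : ℕ → ℂ) (s : ℂ) :
    LSeries f s = ∑' n : ℕ, f (n + 1) * ((n + 1 : ℕ) : ℂ) ^ (-s) := by
  have hsupport : Function.support (LSeries.term f s) ⊆ range Nat.succ := fun n hn ↦ by
    rw [Nat.range_succ, mem_ofPred_eq, Nat.pos_iff_ne_zero]
    rintro rfl
    exact hn (LSeries.term_zero f s)
  rw [LSeries, ← Nat.succ_injective.tsum_eq hsupport]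
  refine tsum_congr fun n ↦ ?_
  rw [LSeries.term_of_ne_zero n.succ_ne_zero, Complex.cpow_neg, div_eq_mul_inv]

end UnitSteps

section Linearithmic

open Set Asymptotics
open scoped NNReal

/-- The function `a x log x + x P(log x / log β)`, where `P` is the `1`-periodic function read off
from `f`; the cumulative digit sums have this form. -/
def linearithmic (β : ℝ) (a : ℂ) (f : UnitAddCircle → ℂ) (x : ℝ) : ℂ :=
  x * (a * Real.log x + logPeriodic β f x)

variable {β ε : ℝ} {a s : ℂ} {f : UnitAddCircle → ℂ} {g : ℝ → ℂ}

lemma snd_rpow_isBigO_fst_rpow (hε : 0 ≤ ε) :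
    (fun p : ℝ × ℝ ↦ p.2 ^ ε) =O[𝓟 unitSteps] fun p ↦ p.1 ^ ε := by
  refine isBigO_principal.2 ⟨2 ^ ε, fun p ⟨h1, hle, hlt⟩ ↦ ?_⟩
  have h0 : 0 < p.1 := one_pos.trans h1
  have h0' : 0 < p.2 := h0.trans_le hle
  rw [Real.norm_of_nonneg (by positivity), Real.norm_of_nonneg (by positivity),
    ← Real.mul_rpow zero_le_two h0.le]
  gcongr
  linarith

lemma ofReal_mul_step_isBigO (hε : 0 ≤ ε) (hg : g =O[𝓟 (Ioi 1)] fun x ↦ x ^ ε)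
    (hstep : (fun p : ℝ × ℝ ↦ g p.2 - g p.1) =O[𝓟 unitSteps] fun p ↦ p.1 ^ (ε - 1)) :
    (fun p : ℝ × ℝ ↦ p.2 * g p.2 - p.1 * g p.1) =O[𝓟 unitSteps] fun p ↦ p.1 ^ ε := by
  have hsnd : Tendsto Prod.snd (𝓟 unitSteps) (𝓟 (Ioi 1)) :=
    tendsto_principal_principal.2 fun p hp ↦ hp.1.trans_le hp.2.1
  have hlength : (fun p : ℝ × ℝ ↦ ((p.2 - p.1 : ℝ) : ℂ)) =O[𝓟 unitSteps] fun _ ↦ (1 : ℝ) :=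
    isBigO_principal.2 ⟨1, fun p ⟨_, hle, hlt⟩ ↦ by
      rw [Complex.norm_real, Real.norm_of_nonneg (by linarith), norm_one]
      linarith⟩
  have hfst : (fun p : ℝ × ℝ ↦ (p.1 : ℂ)) =O[𝓟 unitSteps] fun p ↦ p.1 :=
    Complex.isBigO_ofReal_left.2 (isBigO_refl _ _)
  have hleft := hlength.mul ((hg.comp_tendsto hsnd).trans (snd_rpow_isBigO_fst_rpow hε))
  have hright : (fun p : ℝ × ℝ ↦ p.1 * (g p.2 - g p.1)) =O[𝓟 unitSteps] fun p ↦ p.1 ^ ε :=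
    (hfst.mul hstep).congr' .rfl <| eventually_principal.2 fun p hp ↦ by
      have h0 : p.1 ≠ 0 := (one_pos.trans hp.1).ne'
      simp only [Real.rpow_sub_one h0, mul_div_cancel₀ _ h0]
  refine ((hleft.congr_right fun p ↦ one_mul _).add hright).congr_left fun p ↦ ?_
  simp only [Function.comp_apply]
  push_cast
  ring

lemma log_step_isBigO :
    (fun p : ℝ × ℝ ↦ Real.log p.2 - Real.log p.1) =O[𝓟 unitSteps] fun p ↦ p.1 ^ (-1 : ℝ) := by
  refine isBigO_principal.2 ⟨1, fun p ⟨h1, hle, hlt⟩ ↦ ?_⟩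
  have h0 : 0 < p.1 := one_pos.trans h1
  have h0' : 0 < p.2 := h0.trans_le hle
  rw [Real.norm_of_nonneg (sub_nonneg.2 (Real.log_le_log h0 hle)), one_mul,
    Real.norm_of_nonneg (by positivity), Real.rpow_neg_one]
  calc Real.log p.2 - Real.log p.1 = Real.log (p.2 / p.1) := (Real.log_div h0'.ne' h0.ne').symm
    _ ≤ p.2 / p.1 - 1 := Real.log_le_sub_one_of_pos (by positivity)
    _ = (p.2 - p.1) / p.1 := by rw [sub_div, div_self h0.ne']
    _ ≤ 1 / p.1 := by gcongr; linarith
    _ = p.1⁻¹ := one_div _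

lemma logPeriodic_step_isBigO (β : ℝ) {α : ℝ≥0} (hf : MemHolder α f) :
    (fun p : ℝ × ℝ ↦ logPeriodic β f p.2 - logPeriodic β f p.1)
      =O[𝓟 unitSteps] fun p ↦ p.1 ^ (-α : ℝ) := by
  obtain ⟨C, hC⟩ := hf
  have hlog : (fun p : ℝ × ℝ ↦ |Real.log p.2 / Real.log β - Real.log p.1 / Real.log β|)
      =O[𝓟 unitSteps] fun p ↦ p.1 ^ (-1 : ℝ) := by
    refine (log_step_isBigO.const_mul_left (Real.log β)⁻¹).norm_left.congr_left fun p ↦ ?_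
    rw [Real.norm_eq_abs]
    congr 1
    ring
  have hpow := hlog.rpow α.coe_nonneg
    (eventually_principal.2 fun p hp ↦ Real.rpow_nonneg (one_pos.trans hp.1).le _)
  refine (IsBigO.of_bound C (.of_forall fun p ↦ ?_)).trans (hpow.congr' .rfl ?_)
  · rw [Real.norm_of_nonneg (by positivity), ← dist_eq_norm]
    refine (hC.dist_le _ _).trans ?_
    gcongr
    rw [dist_eq_norm, ← AddCircle.coe_sub]
    exact QuotientAddGroup.norm_mk_le_norm
  · exact eventually_principal.2 fun p hp ↦ by
      simp only [← Real.rpow_mul (one_pos.trans hp.1).le, neg_one_mul]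

lemma log_add_logPeriodic_isBigO (β : ℝ) (a : ℂ) (hf : Continuous f) (hε : 0 < ε) :
    (fun x ↦ a * Real.log x + logPeriodic β f x) =O[𝓟 (Ioi 1)] fun x ↦ x ^ ε := by
  have hlog : (fun x ↦ (Real.log x : ℂ)) =O[𝓟 (Ioi 1)] fun x ↦ x ^ ε :=
    Complex.isBigO_ofReal_left.2 (log_isBigO_rpow hε)
  exact (hlog.const_mul_left a).add
    ((logPeriodic_isBigO_one β hf _).trans (rpow_isBigO_rpow hε.le))

lemma log_add_logPeriodic_step_isBigO (β : ℝ) (a : ℂ) {α : ℝ≥0} (hα : α ≤ 1)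
    (hf : MemHolder α f) :
    (fun p : ℝ × ℝ ↦ a * Real.log p.2 + logPeriodic β f p.2 -
      (a * Real.log p.1 + logPeriodic β f p.1)) =O[𝓟 unitSteps] fun p ↦ p.1 ^ (-α : ℝ) := by
  have hfst : Tendsto Prod.fst (𝓟 unitSteps) (𝓟 (Ioi 1)) :=
    tendsto_principal_principal.2 fun p hp ↦ hp.1
  have hlog : (fun p : ℝ × ℝ ↦ ((Real.log p.2 - Real.log p.1 : ℝ) : ℂ))
      =O[𝓟 unitSteps] fun p ↦ p.1 ^ (-α : ℝ) :=
    Complex.isBigO_ofReal_left.2 <| log_step_isBigO.trans <|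
      (rpow_isBigO_rpow (neg_le_neg (NNReal.coe_le_one.2 hα))).comp_tendsto hfst
  refine ((hlog.const_mul_left a).add (logPeriodic_step_isBigO β hf)).congr_left fun p ↦ ?_
  push_cast
  ring

lemma measurable_linearithmic (β : ℝ) (a : ℂ) (hf : Continuous f) :
    Measurable (linearithmic β a f) := by
  have := measurable_logPeriodic β hf
  unfold linearithmic
  fun_prop

lemma linearithmic_isBigO (β : ℝ) (a : ℂ) (hf : Continuous f) (hε : 0 < ε) :
    linearithmic β a f =O[𝓟 (Ioi 1)] fun x ↦ x ^ (1 + ε) := by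
  have hid : (fun x : ℝ ↦ (x : ℂ)) =O[𝓟 (Ioi 1)] fun x ↦ x :=
    Complex.isBigO_ofReal_left.2 (isBigO_refl _ _)
  refine (hid.mul (log_add_logPeriodic_isBigO β a hf hε)).congr' .rfl ?_
  exact eventually_principal.2 fun x hx ↦ by
    simp only [Real.rpow_add (one_pos.trans hx), Real.rpow_one]

lemma linearithmic_step_isBigO (β : ℝ) (a : ℂ) (hf : Continuous f) {α : ℝ≥0} (hα : α < 1)
    (hfα : MemHolder α f) :
    (fun p : ℝ × ℝ ↦ linearithmic β a f p.2 - linearithmic β a f p.1)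
      =O[𝓟 unitSteps] fun p ↦ p.1 ^ (1 - α : ℝ) :=
  have hε : 0 < (1 - α : ℝ) := sub_pos.2 (NNReal.coe_lt_one.2 hα)
  ofReal_mul_step_isBigO hε.le (log_add_logPeriodic_isBigO β a hf hε) <| by
    simpa only [sub_sub_cancel_left] using log_add_logPeriodic_step_isBigO β a hα.le hfα

lemma tailMellin_linearithmic (hβ : 1 < β) (a : ℂ) (hf : Continuous f) (hs : 1 < s.re) :
    tailMellin (linearithmic β a f) s =
      a / (s - 1) ^ 2 + logPeriodicContinuation β f (s - 1) := by
  have hs1 : 0 < (s - 1).re := by simpa using hs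
  have hlog : TailMellinConvergent (fun x ↦ a * Real.log x) (s - 1) := by
    simpa using (tailMellinConvergent_log hs1).const_mul a
  calc tailMellin (linearithmic β a f) s
      = tailMellin (fun x ↦ a * Real.log x + logPeriodic β f x) (s - 1) := tailMellin_id_mul _ s
    _ = tailMellin (fun x ↦ a * Real.log x) (s - 1) + tailMellin (logPeriodic β f) (s - 1) :=
        tailMellin_add hlog (tailMellinConvergent_logPeriodic β hf hs1)
    _ = _ := by
        rw [tailMellin_const_mul, tailMellin_log hs1, tailMellin_logPeriodic hβ hf hs1,
          mul_one_div]

end Linearithmic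

section LinearithmicContinuation

open Set
open scoped NNReal

/-- The continuation to `0 < re s` of the Dirichlet series whose coefficients are the forward
differences of `linearithmic β a f`. -/
def linearithmicContinuation (β : ℝ) (a : ℂ) (f : UnitAddCircle → ℂ) (s : ℂ) : ℂ :=
  s * (a / (s - 1) ^ 2 + logPeriodicContinuation β f (s - 1) +
    tailMellin (stepError (linearithmic β a f)) s)

variable {β : ℝ} {f : UnitAddCircle → ℂ} {s : ℂ}

lemma continuous_of_memHolder (hf : ∀ α : ℝ≥0, 0 < α → α < 1 → MemHolder α f) : Continuous f :=
  (hf (1 / 2) (by positivity) (NNReal.half_lt_self one_ne_zero)).holderWith.continuous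
    (by positivity)

lemma exists_linearithmic_step_isBigO (β : ℝ) (a : ℂ)
    (hf : ∀ α : ℝ≥0, 0 < α → α < 1 → MemHolder α f) {r : ℝ} (hr : 0 < r) :
    ∃ ε : ℝ, 0 < ε ∧ ε < r ∧
      (fun p : ℝ × ℝ ↦ linearithmic β a f p.2 - linearithmic β a f p.1)
        =O[𝓟 unitSteps] fun p ↦ p.1 ^ ε := by
  obtain ⟨α, hα, hα1⟩ := exists_between (max_lt zero_lt_one (sub_lt_self 1 hr))
  obtain ⟨hα0, hαr⟩ := max_lt_iff.1 hα
  lift α to ℝ≥0 using hα0.le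
  rw [NNReal.coe_lt_one] at hα1
  exact ⟨1 - α, sub_pos.2 hα1, by linarith, linearithmic_step_isBigO β a
    (continuous_of_memHolder hf) hα1 (hf α hα0 hα1)⟩

lemma differentiableAt_tailMellin_stepError (β : ℝ) (a : ℂ)
    (hf : ∀ α : ℝ≥0, 0 < α → α < 1 → MemHolder α f) (hs : 0 < s.re) :
    DifferentiableAt ℂ (tailMellin (stepError (linearithmic β a f))) s := by
  obtain ⟨ε, hε, hεs, hstep⟩ := exists_linearithmic_step_isBigO β a hf hs
  exact differentiableAt_tailMellin (measurable_stepError (measurable_linearithmic β a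
    (continuous_of_memHolder hf))).aestronglyMeasurable (stepError_isBigO hε.le hstep) hεs

theorem linearithmicContinuation_eq_LSeries (hβ : 1 < β) (a : ℂ)
    (hf : ∀ α : ℝ≥0, 0 < α → α < 1 → MemHolder α f) (hs : 1 < s.re) :
    linearithmicContinuation β a f s =
      LSeries (fun n : ℕ ↦ fwdDiff 1 (linearithmic β a f) n) s := by
  have hcont := continuous_of_memHolder hf
  obtain ⟨ε, hε, hεs, hstep⟩ := exists_linearithmic_step_isBigO β a hf (sub_pos.2 hs)
  rw [LSeries_fwdDiff hε.le (by linarith) (measurable_linearithmic β a hcont)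
    (linearithmic_isBigO β a hcont hε) hstep, tailMellin_linearithmic hβ a hcont hs,
    linearithmicContinuation]

theorem differentiableAt_linearithmicContinuation (hβ : 1 < β) (a : ℂ)
    (hf : ∀ α : ℝ≥0, 0 < α → α < 1 → MemHolder α f) (hs : 0 < s.re)
    (hpole : ∀ k, s ≠ 1 + logFreq β k) :
    DifferentiableAt ℂ (linearithmicContinuation β a f) s := by
  have hs1 : s - 1 ≠ 0 := sub_ne_zero.2 (by simpa [logFreq] using hpole 0)
  have hshift : DifferentiableAt ℂ (fun s ↦ s - 1) s := differentiableAt_id.sub_const 1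
  have hperiodic := (differentiableAt_logPeriodicContinuation hβ (continuous_of_memHolder hf)
    fun k hk ↦ hpole k (by rw [← hk, add_sub_cancel])).comp s hshift
  exact differentiableAt_id.mul ((((differentiableAt_const a).div (hshift.pow 2)
    (pow_ne_zero 2 hs1)).add hperiodic).add (differentiableAt_tailMellin_stepError β a hf hs))

lemma tendsto_sub_mul_logPeriodicContinuation_add_tailMellin_stepError (hβ : 1 < β) (a : ℂ)
    (hf : ∀ α : ℝ≥0, 0 < α → α < 1 → MemHolder α f) (k : ℤ) :
    Tendsto (fun s ↦ (s - (1 + logFreq β k)) * (logPeriodicContinuation β f (s - 1) +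
      tailMellin (stepError (linearithmic β a f)) s)) (𝓝[≠] (1 + logFreq β k))
      (𝓝 (fourierCoeff f k)) := by
  set p := 1 + logFreq β k with hp
  have hre : 0 < p.re := by simp [hp, logFreq_re]
  have hshift : Tendsto (fun s ↦ s - 1) (𝓝[≠] p) (𝓝[≠] logFreq β k) := by
    have h := (continuous_sub_right (1 : ℂ)).continuousWithinAt.tendsto_nhdsWithin
      (x := p) (s := {p}ᶜ) (t := {logFreq β k}ᶜ)
    rw [hp, add_sub_cancel_left] at h
    exact h fun s hs h1 ↦ hs (by rw [mem_singleton_iff, ← h1, add_sub_cancel])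
  have hperiodic := (tendsto_sub_logFreq_mul_logPeriodicContinuation hβ
    (continuous_of_memHolder hf) k).comp hshift
  have herror : Tendsto (fun s ↦ (s - p) * tailMellin (stepError (linearithmic β a f)) s)
      (𝓝[≠] p) (𝓝 0) := by
    have h := (differentiableAt_tailMellin_stepError β a hf hre).continuousAt.tendsto.mono_left
      (nhdsWithin_le_nhds (s := {p}ᶜ))
    have hsub : Tendsto (fun s ↦ s - p) (𝓝[≠] p) (𝓝 0) :=
      tendsto_sub_nhds_zero_iff.2 nhdsWithin_le_nhds
    simpa only [zero_mul] using hsub.mul h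
  rw [← add_zero (fourierCoeff f k)]
  refine (hperiodic.add herror).congr fun s ↦ ?_
  rw [Function.comp_apply, hp]
  ring

theorem tendsto_sq_mul_linearithmicContinuation_sub_div (hβ : 1 < β) (a : ℂ)
    (hf : ∀ α : ℝ≥0, 0 < α → α < 1 → MemHolder α f) :
    Tendsto (fun s ↦ ((s - 1) ^ 2 * linearithmicContinuation β a f s - a) / (s - 1)) (𝓝[≠] 1)
      (𝓝 (a + fourierCoeff f 0)) := by
  have hsimple := tendsto_sub_mul_logPeriodicContinuation_add_tailMellin_stepError hβ a hf 0
  have hzero : 1 + logFreq β 0 = 1 := by simp [logFreq]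
  rw [hzero] at hsimple
  have hid : Tendsto (fun s : ℂ ↦ s) (𝓝[≠] 1) (𝓝 1) := nhdsWithin_le_nhds
  rw [← one_mul (fourierCoeff f 0)]
  refine ((hid.mul hsimple).const_add a).congr' ?_
  filter_upwards [self_mem_nhdsWithin] with s hs
  have hs1 : s - 1 ≠ 0 := sub_ne_zero.2 hs
  rw [linearithmicContinuation]
  generalize logPeriodicContinuation β f (s - 1) = P
  field_simp
  ring

theorem tendsto_sq_mul_linearithmicContinuation (hβ : 1 < β) (a : ℂ)
    (hf : ∀ α : ℝ≥0, 0 < α → α < 1 → MemHolder α f) :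
    Tendsto (fun s ↦ (s - 1) ^ 2 * linearithmicContinuation β a f s) (𝓝[≠] 1) (𝓝 a) := by
  have hsub : Tendsto (fun s : ℂ ↦ s - 1) (𝓝[≠] 1) (𝓝 0) :=
    tendsto_sub_nhds_zero_iff.2 nhdsWithin_le_nhds
  have hlim := (hsub.mul (tendsto_sq_mul_linearithmicContinuation_sub_div hβ a hf)).add_const a
  rw [zero_mul, zero_add] at hlim
  refine hlim.congr' ?_
  filter_upwards [self_mem_nhdsWithin] with s hs
  rw [mul_div_cancel₀ _ (sub_ne_zero.2 hs), sub_add_cancel]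

theorem tendsto_sub_mul_linearithmicContinuation (hβ : 1 < β) (a : ℂ)
    (hf : ∀ α : ℝ≥0, 0 < α → α < 1 → MemHolder α f) {k : ℤ} (hk : k ≠ 0) :
    Tendsto (fun s ↦ (s - (1 + logFreq β k)) * linearithmicContinuation β a f s)
      (𝓝[≠] (1 + logFreq β k)) (𝓝 ((1 + logFreq β k) * fourierCoeff f k)) := by
  have hsimple := tendsto_sub_mul_logPeriodicContinuation_add_tailMellin_stepError hβ a hf k
  set p := 1 + logFreq β k with hp
  have hp1 : (p - 1) ^ 2 ≠ 0 := by
    rw [hp, add_sub_cancel_left]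
    exact pow_ne_zero 2 (logFreq_ne_zero hβ hk)
  have hid : Tendsto (fun s : ℂ ↦ s) (𝓝[≠] p) (𝓝 p) := nhdsWithin_le_nhds
  have hdouble := (hid.sub_const p).mul
    ((tendsto_const_nhds (x := a)).div ((hid.sub_const 1).pow 2) hp1)
  have hlim := hid.mul (hdouble.add hsimple)
  rw [sub_self, zero_mul, zero_add] at hlim
  refine hlim.congr fun s ↦ ?_
  rw [linearithmicContinuation, Pi.div_apply]
  ring

end LinearithmicContinuation

section DigitSum

variable {β : ℝ}

lemma cumDigitSumInterp_eq_linearithmic (hβ : 1 < β) (n : ℕ) :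
    cumDigitSumInterp β n =
      linearithmic β ((β - 1) / (2 * Real.log β)) (delangeCircle β) n := by
  rw [cumDigitSumInterp, linearithmic, logPeriodic, delangeH_eq_delangeCircle hβ,
    Complex.ofReal_natCast]
  ring

lemma tsum_digitSumInterp_mul_cpow (hβ : 1 < β) (s : ℂ) :
    ∑' n : ℕ, digitSumInterp β (n + 1) * ((n + 1 : ℕ) : ℂ) ^ (-s) =
      LSeries (fun n : ℕ ↦ fwdDiff 1
        (linearithmic β ((β - 1) / (2 * Real.log β)) (delangeCircle β)) n) s := by
  rw [LSeries_eq_tsum_succ]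
  simp only [digitSumInterp, cumDigitSumInterp_eq_linearithmic hβ, fwdDiff, Nat.cast_add,
    Nat.cast_one]

lemma add_fourierCoeff_delangeCircle_zero (hβ : 1 < β) :
    ((β : ℂ) - 1) / (2 * Real.log β) + fourierCoeff (delangeCircle β) 0 =
      ((β : ℂ) - 1) / (2 * Real.log β) * Real.log (2 * Real.pi) - ((β : ℂ) + 1) / 4 := by
  rw [fourierCoeff_delangeCircle hβ, delangeCoeff, if_pos rfl]
  ring

end DigitSum

theorem Fbeta_meromorphic_continuation (β : ℝ) (hβ : 1 < β) :
    ∃ F : ℂ → ℂ,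
      -- (i) analytic on Re(s) > 0 away from the points 1 + 2πik/log β
      (∀ s : ℂ, 0 < s.re →
        (∀ k : ℤ, s ≠ 1 + 2 * Real.pi * Complex.I * k / Real.log β) →
        DifferentiableAt ℂ F s) ∧
      -- (ii) agrees with the Dirichlet series for Re(s) > 1
      (∀ s : ℂ, 1 < s.re →
        F s = ∑' n : ℕ, digitSumInterp β (n + 1) * ((n + 1 : ℕ) : ℂ) ^ (-s)) ∧
      -- (iii) double pole at s = 1 with the stated Laurent expansion
      (Filter.Tendsto (fun s : ℂ => (s - 1) ^ 2 * F s) (𝓝[≠] (1 : ℂ))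
        (𝓝 (((β : ℂ) - 1) / (2 * Real.log β))) ∧
       Filter.Tendsto
        (fun s : ℂ => ((s - 1) ^ 2 * F s - ((β : ℂ) - 1) / (2 * Real.log β)) / (s - 1))
        (𝓝[≠] (1 : ℂ))
        (𝓝 ((((β : ℂ) - 1) / (2 * Real.log β)) * Real.log (2 * Real.pi)
            - ((β : ℂ) + 1) / 4))) ∧
      -- (iv) simple poles at s = 1 + 2πik/log β, k ≠ 0
      (∀ k : ℤ, k ≠ 0 →
        Filter.Tendsto
          (fun s : ℂ => (s - (1 + 2 * Real.pi * Complex.I * k / Real.log β)) * F s)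
          (𝓝[≠] (1 + 2 * Real.pi * Complex.I * k / Real.log β))
          (𝓝 ((1 + 2 * Real.pi * Complex.I * k / Real.log β) * delangeCoeff β k))) := by
  have hHolder (α : NNReal) (hα0 : 0 < α) (hα1 : α < 1) : MemHolder α (delangeCircle β) :=
    memHolder_delangeCircle hβ hα0 hα1
  set a : ℂ := ((β : ℂ) - 1) / (2 * Real.log β) with ha
  refine ⟨linearithmicContinuation β a (delangeCircle β), fun s hs hpole ↦ ?_, fun s hs ↦ ?_,
    ⟨?_, ?_⟩, fun k hk ↦ ?_⟩
  · exact differentiableAt_linearithmicContinuation hβ a hHolder hs hpole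
  · rw [tsum_digitSumInterp_mul_cpow hβ, linearithmicContinuation_eq_LSeries hβ a hHolder hs]
  · exact tendsto_sq_mul_linearithmicContinuation hβ a hHolder
  · rw [ha, ← add_fourierCoeff_delangeCircle_zero hβ, ← ha]
    exact tendsto_sq_mul_linearithmicContinuation_sub_div hβ a hHolder
  · rw [← fourierCoeff_delangeCircle hβ k]
    exact tendsto_sub_mul_linearithmicContinuation hβ a hHolder hk
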